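/- arXiv:2307.08497 — 3 statements merged into one kernel-verified Lean document; each statement's English description precedes it below -/
import Mathlib

section
/- Let 𝓗 be a minor-closed class of graphs, let c, k ∈ ℕ, and let X be a graph with X ∉ 𝓗. If a graph G contains a (≥ck)-subdivision of X as a c-quasi-geodesic subgraph, then the radial 𝓗-width of G is at least k/12. -/
open SimpleGraph

namespace RadialPaper

variable {V W N : Type*}

/-- The ball of radius `r` around a set `U` of vertices of `G`. -/
def ballSet (G : SimpleGraph V) (U : Set V) (r : ℕ) : Set V :=
  {v | ∃ u ∈ U, G.edist u v ≤ (r : ℕ∞)}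

/-- `G` has radius at most `r`: some vertex has distance at most `r` from every vertex.
The empty graph has radius `0`; a nonempty disconnected graph has radius `∞`, hence
satisfies `radiusLE` for no `r`. -/
def radiusLE (G : SimpleGraph V) (r : ℕ) : Prop :=
  Nonempty V → ∃ v : V, ∀ w : V, G.edist v w ≤ (r : ℕ∞)

/-- `(Hg, B)` is a graph-decomposition of `G` modelled on `Hg`. -/
def IsGraphDecomp (G : SimpleGraph V) (Hg : SimpleGraph N) (B : N → Set V) : Prop :=
  (∀ v : V, ∃ h : N, v ∈ B h) ∧
  (∀ ⦃u v : V⦄, G.Adj u v → ∃ h : N, u ∈ B h ∧ v ∈ B h) ∧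
  (∀ v : V, (Hg.induce {h : N | v ∈ B h}).Connected)

/-- A subgraph `X` of `G` is `c`-quasi-geodesic. -/
def IsQuasiGeodesic (G : SimpleGraph V) (X : G.Subgraph) (c : ℕ) : Prop :=
  ∀ u v : X.verts, X.coe.edist u v ≤ (c : ℕ∞) * G.edist (u : V) (v : V)

/-- The subgraph `Y` of `G` is a `(≥ k)`-subdivision of the graph `X`. -/
def IsSubdivGE (k : ℕ) (X : SimpleGraph W) {G : SimpleGraph V} (Y : G.Subgraph) : Prop :=
  ∃ (f : W → V) (p : ∀ ⦃u v : W⦄, X.Adj u v → G.Walk (f u) (f v)),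
    Function.Injective f ∧
    (∀ ⦃u v : W⦄ (h : X.Adj u v), (p h).IsPath) ∧
    (∀ ⦃u v : W⦄ (h : X.Adj u v), k + 1 ≤ (p h).length) ∧
    (∀ ⦃u v : W⦄ (h : X.Adj u v), p h.symm = (p h).reverse) ∧
    (∀ ⦃u v : W⦄ (h : X.Adj u v) (w : W), f w ∈ (p h).support → w = u ∨ w = v) ∧
    (∀ ⦃u v u' v' : W⦄ (h : X.Adj u v) (h' : X.Adj u' v'), s(u, v) ≠ s(u', v') →
      ∀ x : V, x ∈ (p h).support → x ∈ (p h').support →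
        (x = f u ∨ x = f v) ∧ (x = f u' ∨ x = f v')) ∧
    Y.verts = Set.range f ∪ {x : V | ∃ (u v : W) (h : X.Adj u v), x ∈ (p h).support} ∧
    Y.edgeSet = {e : Sym2 V | ∃ (u v : W) (h : X.Adj u v), e ∈ (p h).edges}

/-- `G` contains a `(≥ k)`-subdivision of `X` as a `c`-quasi-geodesic subgraph. -/
def ContainsQuasiGeodesicSubdivGE (G : SimpleGraph V) (k : ℕ) (X : SimpleGraph W) (c : ℕ) :
    Prop :=
  ∃ Y : G.Subgraph, IsSubdivGE k X Y ∧ IsQuasiGeodesic G Y c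

/-- `X` is a minor of `Hg`. -/
def IsMinorOf (X : SimpleGraph W) (Hg : SimpleGraph N) : Prop :=
  ∃ B : W → Set N, (∀ w, (B w).Nonempty) ∧ (∀ w, (Hg.induce (B w)).Connected) ∧
    (∀ ⦃w w' : W⦄, w ≠ w' → Disjoint (B w) (B w')) ∧
    (∀ ⦃w w' : W⦄, X.Adj w w' → ∃ a ∈ B w, ∃ b ∈ B w', Hg.Adj a b)

/-- A class of (finite) graphs, given on the canonical vertex sets `Fin n`, is minor-closed. -/
def MinorClosed (ℋ : ∀ n : ℕ, SimpleGraph (Fin n) → Prop) : Prop :=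
  ∀ ⦃m n : ℕ⦄ (X : SimpleGraph (Fin m)) (Hg : SimpleGraph (Fin n)),
    ℋ n Hg → IsMinorOf X Hg → ℋ m X

/-- The triangle `K³`. -/
def triangleGraph : SimpleGraph (Fin 3) := ⊤

/-- The claw `K_{1,3}`, with centre `0`. -/
def clawGraph : SimpleGraph (Fin 4) := SimpleGraph.fromRel (fun a _ => a = 0)

/-- The wrench graph: two adjacent vertices `0, 1` of degree three, with leaves `2,3` and
`4,5` respectively. -/
def wrenchGraph : SimpleGraph (Fin 6) :=
  SimpleGraph.fromRel (fun a b =>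
    (a = 0 ∧ b = 1) ∨ (a = 0 ∧ b = 2) ∨ (a = 0 ∧ b = 3) ∨ (a = 1 ∧ b = 4) ∨ (a = 1 ∧ b = 5))

/-- The star `K_{1,m}`, with centre `none`. -/
def starGraph (m : ℕ) : SimpleGraph (Option (Fin m)) :=
  SimpleGraph.fromRel (fun a _ => a = none)

/-- `Hg` is a disjoint union of paths: every connected component is a path. -/
def IsUnionOfPaths (Hg : SimpleGraph N) : Prop :=
  ∀ cc : Hg.ConnectedComponent, ∃ m : ℕ,
    Nonempty (Hg.induce cc.supp ≃g SimpleGraph.pathGraph m)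

/-- `Hg` is a disjoint union of cycles: every connected component is a cycle. -/
def IsUnionOfCycles (Hg : SimpleGraph N) : Prop :=
  ∀ cc : Hg.ConnectedComponent, ∃ m : ℕ, 3 ≤ m ∧
    Nonempty (Hg.induce cc.supp ≃g SimpleGraph.cycleGraph m)

/-- `Hg` is a subdivided star, i.e. a `(≥ 0)`-subdivision of some star `K_{1,m}`. -/
def IsSubdividedStar (Hg : SimpleGraph N) : Prop :=
  ∃ m : ℕ, IsSubdivGE 0 (starGraph m) (⊤ : Hg.Subgraph)

/-- `Hg` is a disjoint union of subdivided stars. -/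
def IsUnionOfSubdividedStars (Hg : SimpleGraph N) : Prop :=
  ∀ cc : Hg.ConnectedComponent, IsSubdividedStar (Hg.induce cc.supp)

/-- A graph-decomposition is honest: bags of adjacent nodes intersect. -/
def Honest (Hg : SimpleGraph N) (B : N → Set V) : Prop :=
  ∀ ⦃h h' : N⦄, Hg.Adj h h' → (B h ∩ B h').Nonempty

/-- The outer-radial width of a decomposition of `G` is at most `r`. -/
def OuterRadialWidthLE (G : SimpleGraph V) (B : N → Set V) (r : ℕ) : Prop :=
  ∀ h : N, ∃ z : V, ∀ v ∈ B h, G.edist z v ≤ (r : ℕ∞)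

/-- The radial spread of a decomposition `(Hg, B)` of a graph with vertex set `V`
is at most `r`. -/
def RadialSpreadLE (Hg : SimpleGraph N) (B : N → Set V) (r : ℕ) : Prop :=
  ∀ v : V, radiusLE (Hg.induce {h : N | v ∈ B h}) r

/-- `φ` is an `(m, a, M, A, r)`-quasi-isometry from `Hg` to `G`. -/
def IsQuasiIsometry (Hg : SimpleGraph N) (G : SimpleGraph V) (m a M A r : ℕ)
    (φ : N → V) : Prop :=
  (∀ h h' : N, Hg.edist h h' ≤ (m : ℕ∞) * G.edist (φ h) (φ h') + (a : ℕ∞)) ∧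
  (∀ h h' : N, G.edist (φ h) (φ h') ≤ (M : ℕ∞) * Hg.edist h h' + (A : ℕ∞)) ∧
  (∀ v : V, ∃ h : N, G.edist v (φ h) ≤ (r : ℕ∞))

/-- `C` is a connected component of `G - S`: a maximal connected set of vertices
disjoint from `S`. -/
def IsCompOf (G : SimpleGraph V) (C S : Set V) : Prop :=
  C.Nonempty ∧ Disjoint C S ∧ (G.induce C).Connected ∧
  ∀ D : Set V, C ⊆ D → Disjoint D S → (G.induce D).Connected → D = C

/-- The subgraph `P` of `G` is an `M₀`–`M₁` path meeting `C`. -/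
def IsM01Path (G : SimpleGraph V) (M₀ M₁ C : Set V) (P : G.Subgraph) : Prop :=
  ∃ (x y : V) (q : G.Walk x y), q.IsPath ∧ q.toSubgraph = P ∧ x ∈ M₀ ∧ y ∈ M₁ ∧
    (∀ z ∈ q.support, z ≠ x → z ≠ y → z ∉ M₀ ∪ M₁) ∧ ∃ z ∈ q.support, z ∈ C

/-- The number of `M₀`–`M₁` paths meeting `C` that are contained in the subgraph `OS`. -/
noncomputable def Wcount (G : SimpleGraph V) (M₀ M₁ C : Set V) (OS : G.Subgraph) : ℕ :=
  Set.ncard {P : G.Subgraph | P ≤ OS ∧ IsM01Path G M₀ M₁ C P}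


/-- Walk-connectedness inside a set. -/
def RW (H : SimpleGraph N) (S : Set N) (a b : N) : Prop :=
  ∃ q : H.Walk a b, ∀ z ∈ q.support, z ∈ S

theorem RW.refl' {H : SimpleGraph N} {S : Set N} {a : N} (h : a ∈ S) : RW H S a a :=
  ⟨Walk.nil, by simpa using h⟩

theorem RW.symm' {H : SimpleGraph N} {S : Set N} {a b : N} (h : RW H S a b) : RW H S b a := by
  obtain ⟨q, hq⟩ := h
  exact ⟨q.reverse, by simpa using hq⟩

theorem RW.trans' {H : SimpleGraph N} {S : Set N} {a b d : N} (h : RW H S a b)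
    (h' : RW H S b d) : RW H S a d := by
  obtain ⟨q, hq⟩ := h
  obtain ⟨q', hq'⟩ := h'
  refine ⟨q.append q', fun z hz => ?_⟩
  rw [Walk.mem_support_append_iff] at hz
  exact hz.elim (hq z) (hq' z)

theorem RW.mono' {H : SimpleGraph N} {S T : Set N} {a b : N} (h : RW H S a b)
    (hST : S ⊆ T) : RW H T a b := by
  obtain ⟨q, hq⟩ := h
  exact ⟨q, fun z hz => hST (hq z hz)⟩

theorem RW.of_connected {H : SimpleGraph N} {S : Set N} (h : (H.induce S).Connected)
    {a b : N} (ha : a ∈ S) (hb : b ∈ S) : RW H S a b := by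
  obtain ⟨q⟩ := h.preconnected ⟨a, ha⟩ ⟨b, hb⟩
  refine ⟨q.map (Embedding.induce S).toHom, fun z hz => ?_⟩
  erw [Walk.support_map, List.mem_map] at hz
  obtain ⟨y, _, rfl⟩ := hz
  exact y.2

theorem connected_of_RW {H : SimpleGraph N} {S : Set N} (a : N) (ha : a ∈ S)
    (h : ∀ b ∈ S, RW H S a b) : (H.induce S).Connected := by
  apply H.induce_connected_of_patches a ha
  intro b hb
  obtain ⟨q, hq⟩ := h b hb
  exact ⟨{z | z ∈ q.support}, hq, q.start_mem_support, q.end_mem_support,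
    q.connected_induce_support.preconnected _ _⟩

/-- the exit lemma -/
theorem exists_exit {H : SimpleGraph N} {C T : Set N} {a b : N} (q : H.Walk a b) :
    (∀ z ∈ q.support, z ∈ C) → a ∉ T → b ∈ T →
    ∃ x y, RW H (C \ T) a x ∧ y ∈ T ∧ H.Adj x y := by
  induction q with
  | nil => intro _ h1 h2; exact absurd h2 h1
  | @cons a d b had q ih =>
    intro hC ha hb
    have haC : a ∈ C := hC a (by simp)
    by_cases hd : d ∈ T
    · exact ⟨a, d, RW.refl' ⟨haC, ha⟩, hd, had⟩
    · obtain ⟨x, y, h1, h2, h3⟩ := ih (fun z hz => hC z (by simp [hz])) hd hb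
      refine ⟨x, y, RW.trans' (b := d) ⟨had.toWalk, ?_⟩ h1, h2, h3⟩
      intro z hz
      simp at hz
      rcases hz with rfl | rfl
      · exact ⟨haC, ha⟩
      · exact ⟨hC z (by simp), hd⟩

theorem minor_of_sets {m : ℕ} (X : SimpleGraph (Fin m)) (H : SimpleGraph N)
    (T : Fin m → Set N) (C : Fin m → Fin m → Set N)
    (hTne : ∀ w, (T w).Nonempty)
    (hTc : ∀ w, ∀ a ∈ T w, ∀ b ∈ T w, RW H (T w) a b)
    (hTd : ∀ w w', w ≠ w' → Disjoint (T w) (T w'))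
    (hCc : ∀ u v, X.Adj u v → ∀ a ∈ C u v, ∀ b ∈ C u v, RW H (C u v) a b)
    (hCu : ∀ u v, X.Adj u v → (C u v ∩ T u).Nonempty)
    (hCv : ∀ u v, X.Adj u v → (C u v ∩ T v).Nonempty)
    (hCT : ∀ u v, X.Adj u v → ∀ w, w ≠ u → w ≠ v → Disjoint (C u v) (T w))
    (hCC : ∀ u v u' v', X.Adj u v → X.Adj u' v' → s(u, v) ≠ s(u', v') →
      ∀ x, x ∈ C u v → x ∈ C u' v' → ∃ w, x ∈ T w) :
    IsMinorOf X H := by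
  classical
  let D : Fin m → Fin m → Set N := fun u v =>
    {h | ∃ a ∈ T u, RW H (C u v \ T v) a h}
  have hDC : ∀ u v h, h ∈ D u v → h ∈ C u v ∧ h ∉ T v := by
    rintro u v h ⟨a, _, q, hq⟩
    exact hq h q.end_mem_support
  have hDT : ∀ u v, X.Adj u v → ∀ h ∈ D u v, ∀ w, h ∈ T w → w = u := by
    intro u v huv h hh w hw
    by_contra hne
    obtain ⟨h1, h2⟩ := hDC u v h hh
    by_cases hv : w = v
    · exact h2 (hv ▸ hw)
    · exact Set.disjoint_left.1 (hCT u v huv w hne hv) h1 hw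
  let Br : Fin m → Set N := fun u => {h | h ∈ T u ∨ ∃ v, X.Adj u v ∧ u < v ∧ h ∈ D u v}
  have hTB : ∀ u, T u ⊆ Br u := fun u h hh => Or.inl hh
  have key : ∀ u v, X.Adj u v → u < v → ∃ a ∈ Br u, ∃ b ∈ Br v, H.Adj a b := by
    intro u v huv hlt
    obtain ⟨a, ha, haT⟩ := hCu u v huv
    obtain ⟨b, hb, hbT⟩ := hCv u v huv
    obtain ⟨q, hq⟩ := hCc u v huv a ha b hb
    obtain ⟨x, y, h1, h2, h3⟩ := exists_exit q hq
      (Set.disjoint_left.1 (hTd u v huv.ne) haT) hbT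
    exact ⟨x, Or.inr ⟨v, huv, hlt, a, haT, h1⟩, y, hTB v h2, h3⟩
  refine ⟨Br, fun w => (hTne w).mono (hTB w), ?_, ?_, ?_⟩
  · intro u
    obtain ⟨a, ha⟩ := hTne u
    refine connected_of_RW a (hTB u ha) ?_
    rintro b (hb | ⟨v, huv, hlt, d, hd, hdb⟩)
    · exact (hTc u a ha b hb).mono' (hTB u)
    · refine ((hTc u a ha d hd).mono' (hTB u)).trans' ?_
      obtain ⟨q, hq⟩ := hdb
      refine ⟨q, fun z hz => Or.inr ⟨v, huv, hlt, d, hd, q.takeUntil z hz, fun y hy => ?_⟩⟩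
      exact hq y (q.support_takeUntil_subset_support hz hy)
  · intro u u' hne
    rw [Set.disjoint_left]
    rintro h (h1 | ⟨v, huv, hlt, h1⟩) (h2 | ⟨v', huv', hlt', h2⟩)
    · exact Set.disjoint_left.1 (hTd u u' hne) h1 h2
    · exact hne (hDT u' v' huv' h h2 u h1)
    · exact hne (hDT u v huv h h1 u' h2).symm
    · have hs : s(u, v) ≠ s(u', v') := by
        intro hs
        rw [Sym2.eq_iff] at hs
        rcases hs with ⟨rfl, _⟩ | ⟨rfl, rfl⟩
        · exact hne rfl
        · exact absurd hlt (not_lt.2 hlt'.le)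
      obtain ⟨w, hw⟩ := hCC u v u' v' huv huv' hs h (hDC _ _ _ h1).1 (hDC _ _ _ h2).1
      exact hne ((hDT u v huv h h1 w hw).symm.trans (hDT u' v' huv' h h2 w hw))
  · intro u v huv
    rcases lt_or_gt_of_ne huv.ne with hlt | hlt
    · exact key u v huv hlt
    · obtain ⟨a, ha, b, hb, hab⟩ := key v u huv.symm hlt
      exact ⟨b, hb, a, ha, hab.symm⟩

/-- nodes whose bag meets `A` -/
def nodesOf (B : N → Set V) (A : Set V) : Set N := {h | ∃ v ∈ A, v ∈ B h}

theorem nodesOf_RW {G : SimpleGraph V} {H : SimpleGraph N} {B : N → Set V}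
    (hD : IsGraphDecomp G H B) {A : Set V} {a b : V} (q : G.Walk a b) :
    (∀ z ∈ q.support, z ∈ A) → ∀ h h', a ∈ B h → b ∈ B h' → RW H (nodesOf B A) h h' := by
  induction q with
  | @nil a =>
    intro hA h h' h1 h2
    exact (RW.of_connected (hD.2.2 a) h1 h2).mono' fun x hx => ⟨a, hA a (by simp), hx⟩
  | @cons a d b had q ih =>
    intro hA h h' h1 h2
    obtain ⟨g, hg1, hg2⟩ := hD.2.1 had
    refine RW.trans' ?_ (ih (fun z hz => hA z (by simp [hz])) g h' hg2 h2)
    exact (RW.of_connected (hD.2.2 a) h1 hg1).mono' fun x hx => ⟨a, hA a (by simp), hx⟩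

theorem walk_of_edist_le {G : SimpleGraph V} {a b : V} {n : ℕ} (h : G.edist a b ≤ (n : ℕ∞)) :
    ∃ q : G.Walk a b, q.length ≤ n := by
  obtain ⟨q, hq⟩ := exists_walk_of_edist_ne_top (ne_top_of_le_ne_top (ENat.natCast_ne_top n) h)
  rw [← hq] at h
  exact ⟨q, by exact_mod_cast h⟩

theorem bag_walk {G : SimpleGraph V} {A : Set V} {r : ℕ} (h : radiusLE (G.induce A) r)
    {x y : V} (hx : x ∈ A) (hy : y ∈ A) : ∃ q : G.Walk x y, q.length ≤ 2 * r := by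
  obtain ⟨z, hz⟩ := h ⟨⟨x, hx⟩⟩
  obtain ⟨q, hq⟩ := walk_of_edist_le (hz ⟨x, hx⟩)
  obtain ⟨q', hq'⟩ := walk_of_edist_le (hz ⟨y, hy⟩)
  refine ⟨(q.reverse.append q').map (Embedding.induce A).toHom, ?_⟩
  refine (Walk.length_map _ _).trans_le ?_
  simp only [Walk.length_append, Walk.length_reverse]
  omega

theorem qg_walk {G : SimpleGraph V} {Y : G.Subgraph} {c n : ℕ} (hY : IsQuasiGeodesic G Y c)
    {x y : V} (hx : x ∈ Y.verts) (hy : y ∈ Y.verts) (q : G.Walk x y) (hq : q.length ≤ n) :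
    ∃ q : Y.spanningCoe.Walk x y, q.length ≤ c * n := by
  have h1 : G.edist x y ≤ (n : ℕ∞) := (edist_le q).trans (by exact_mod_cast hq)
  have h2 : Y.coe.edist ⟨x, hx⟩ ⟨y, hy⟩ ≤ ((c * n : ℕ) : ℕ∞) := by
    refine (hY ⟨x, hx⟩ ⟨y, hy⟩).trans ?_
    push_cast
    gcongr
  obtain ⟨p, hp⟩ := walk_of_edist_le h2
  let φ : Y.coe →g Y.spanningCoe := ⟨fun v => v.1, fun {a b} h => h⟩
  exact ⟨p.map φ, by simpa using hp⟩

theorem edge_getVert {G : SimpleGraph V} {u v a b : V} (q : G.Walk u v) :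
    s(a, b) ∈ q.edges → ∃ j, j < q.length ∧
      ((a = q.getVert j ∧ b = q.getVert (j+1)) ∨ (b = q.getVert j ∧ a = q.getVert (j+1))) := by
  induction q with
  | nil => simp
  | @cons u d v hud q ih =>
    intro h
    rw [Walk.edges_cons, List.mem_cons] at h
    rcases h with h | h
    · refine ⟨0, by simp, ?_⟩
      rw [Sym2.eq_iff] at h
      simp only [Walk.getVert_zero, zero_add, Walk.getVert_cons_succ]
      tauto
    · obtain ⟨j, hj, h⟩ := ih h
      exact ⟨j + 1, by simpa using hj, by simpa using h⟩

section subdiv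

variable {X : SimpleGraph W} {G K : SimpleGraph V} {f : W → V}
  {p : ∀ ⦃u v : W⦄, X.Adj u v → G.Walk (f u) (f v)}

theorem same_edge (hrev : ∀ ⦃u v : W⦄ (h : X.Adj u v), p h.symm = (p h).reverse)
    {u v u' v' : W} (h : X.Adj u v) (h' : X.Adj u' v') (hs : s(u, v) = s(u', v')) (e : Sym2 V) :
    e ∈ (p h').edges → e ∈ (p h).edges := by
  rw [Sym2.eq_iff] at hs
  rcases hs with ⟨rfl, rfl⟩ | ⟨rfl, rfl⟩
  · exact id
  · have := hrev h
    intro he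
    have h2 : e ∈ (p h.symm).edges := he
    rw [this] at h2
    simpa using h2

theorem exit_path (hrev : ∀ ⦃u v : W⦄ (h : X.Adj u v), p h.symm = (p h).reverse)
    (hint : ∀ ⦃u v u' v' : W⦄ (h : X.Adj u v) (h' : X.Adj u' v'), s(u, v) ≠ s(u', v') →
      ∀ x : V, x ∈ (p h).support → x ∈ (p h').support →
        (x = f u ∨ x = f v) ∧ (x = f u' ∨ x = f v'))
    (hK : ∀ a b, K.Adj a b → ∃ (u v : W) (h : X.Adj u v), s(a, b) ∈ (p h).edges)
    {u v : W} (h : X.Adj u v) {x y : V} (q : K.Walk x y) :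
    x ∈ (p h).support → y ∉ (p h).support → f u ∈ q.support ∨ f v ∈ q.support := by
  induction q with
  | nil => intro h1 h2; exact absurd h1 h2
  | @cons a b y hab q ih =>
    intro h1 h2
    by_cases hb : b ∈ (p h).support
    · rcases ih hb h2 with h3 | h3 <;> simp [h3]
    · obtain ⟨u', v', h', he⟩ := hK a b hab
      have hne : s(u, v) ≠ s(u', v') := fun hs =>
        hb ((p h).snd_mem_support_of_mem_edges (same_edge hrev h h' hs _ he))
      rcases (hint h h' hne a h1 ((p h').fst_mem_support_of_mem_edges he)).1 with h3 | h3 <;>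
        simp [h3]

theorem adj_branch (hpath : ∀ ⦃u v : W⦄ (h : X.Adj u v), (p h).IsPath)
    (hrev : ∀ ⦃u v : W⦄ (h : X.Adj u v), p h.symm = (p h).reverse)
    (hbr : ∀ ⦃u v : W⦄ (h : X.Adj u v) (w : W), f w ∈ (p h).support → w = u ∨ w = v)
    (hK : ∀ a b, K.Adj a b → ∃ (u v : W) (h : X.Adj u v), s(a, b) ∈ (p h).edges)
    {u : W} {b : V} (hub : K.Adj (f u) b) :
    ∃ (w : W) (h : X.Adj u w), 1 ≤ (p h).length ∧ b = (p h).getVert 1 := by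
  have h1 : ∃ (w : W) (h : X.Adj u w), s(f u, b) ∈ (p h).edges := by
    obtain ⟨u', v', h', he⟩ := hK _ _ hub
    rcases hbr h' u ((p h').fst_mem_support_of_mem_edges he) with rfl | rfl
    · exact ⟨_, h', he⟩
    · exact ⟨_, h'.symm, by rw [hrev]; simpa using he⟩
  obtain ⟨w, h, he⟩ := h1
  refine ⟨w, h, ?_⟩
  obtain ⟨j, hj, hh⟩ := edge_getVert _ he
  have inj := (hpath h).getVert_injOn
  rcases hh with ⟨h2, h3⟩ | ⟨h2, h3⟩
  · have : 0 = j := inj (by simp) (by simp; omega) (by simpa using h2)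
    subst this
    exact ⟨hj, h3⟩
  · have : 0 = j + 1 := inj (by simp) (by simp; omega) (by simpa using h3)
    omega

theorem dist_branch_aux {L : ℕ} (hf : Function.Injective f)
    (hpath : ∀ ⦃u v : W⦄ (h : X.Adj u v), (p h).IsPath)
    (hlen : ∀ ⦃u v : W⦄ (h : X.Adj u v), L ≤ (p h).length)
    (hrev : ∀ ⦃u v : W⦄ (h : X.Adj u v), p h.symm = (p h).reverse)
    (hbr : ∀ ⦃u v : W⦄ (h : X.Adj u v) (w : W), f w ∈ (p h).support → w = u ∨ w = v)
    (hint : ∀ ⦃u v u' v' : W⦄ (h : X.Adj u v) (h' : X.Adj u' v'), s(u, v) ≠ s(u', v') →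
      ∀ x : V, x ∈ (p h).support → x ∈ (p h').support →
        (x = f u ∨ x = f v) ∧ (x = f u' ∨ x = f v'))
    (hK : ∀ a b, K.Adj a b → ∃ (u v : W) (h : X.Adj u v), s(a, b) ∈ (p h).edges)
    {u v : W} (huv : v ≠ u) {x y : V} (q : K.Walk x y) : y = f v →
    ∀ (w : W) (h : X.Adj u w) (i : ℕ), i ≤ (p h).length → x = (p h).getVert i →
      L ≤ q.length + i := by
  induction q with
  | @nil x =>
    intro hy w h i hi hx
    have inj := (hpath h).getVert_injOn
    have hm : f v ∈ (p h).support := by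
      rw [← hy, hx]; exact Walk.getVert_mem_support _ _
    rcases hbr h v hm with h1 | h1
    · exact absurd h1 huv
    · subst h1
      have : i = (p h).length := inj (by simpa using hi) (by simp) (by
        rw [← hx, hy]; simp)
      have := hlen h
      simp; omega
  | @cons a b y hab q ih =>
    intro hy w h i hi hx
    have inj := (hpath h).getVert_injOn
    have hL := hlen h
    rw [Walk.length_cons]
    by_cases hau : a = f u
    · subst hau
      obtain ⟨w', h', h1, h2⟩ := adj_branch hpath hrev hbr hK hab
      have := ih hy w' h' 1 h1 h2
      omega
    by_cases haw : a = f w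
    · have : i = (p h).length := inj (by simpa using hi) (by simp) (by
        rw [← hx, haw]; simp)
      omega
    obtain ⟨u', v', h', he⟩ := hK a b hab
    have hs : s(u, w) = s(u', v') := by
      by_contra hs
      have := (hint h h' hs a (by rw [hx]; exact Walk.getVert_mem_support _ _)
        ((p h').fst_mem_support_of_mem_edges he)).1
      tauto
    obtain ⟨j, hj, hh⟩ := edge_getVert _ (same_edge hrev h h' hs _ he)
    rcases hh with ⟨h2, h3⟩ | ⟨h2, h3⟩
    · have : i = j := inj (by simpa using hi) (by simp; omega) (by rw [← hx, h2])
      have := ih hy w h (j+1) (by omega) h3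
      omega
    · have : i = j + 1 := inj (by simpa using hi) (by simp; omega) (by rw [← hx, h3])
      have := ih hy w h j (by omega) h2
      omega

theorem dist_branch {L : ℕ} (hf : Function.Injective f)
    (hpath : ∀ ⦃u v : W⦄ (h : X.Adj u v), (p h).IsPath)
    (hlen : ∀ ⦃u v : W⦄ (h : X.Adj u v), L ≤ (p h).length)
    (hrev : ∀ ⦃u v : W⦄ (h : X.Adj u v), p h.symm = (p h).reverse)
    (hbr : ∀ ⦃u v : W⦄ (h : X.Adj u v) (w : W), f w ∈ (p h).support → w = u ∨ w = v)
    (hint : ∀ ⦃u v u' v' : W⦄ (h : X.Adj u v) (h' : X.Adj u' v'), s(u, v) ≠ s(u', v') →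
      ∀ x : V, x ∈ (p h).support → x ∈ (p h').support →
        (x = f u ∨ x = f v) ∧ (x = f u' ∨ x = f v'))
    (hK : ∀ a b, K.Adj a b → ∃ (u v : W) (h : X.Adj u v), s(a, b) ∈ (p h).edges)
    {u v : W} (huv : v ≠ u) (q : K.Walk (f u) (f v)) : L ≤ q.length := by
  have hne : ¬ q.Nil := fun h => huv (hf h.eq.symm)
  obtain ⟨w, h, -, -⟩ := adj_branch hpath hrev hbr hK (q.adj_snd hne)
  have := dist_branch_aux hf hpath hlen hrev hbr hint hK huv q rfl w h 0 (by simp) (by simp)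
  omega

end subdiv

theorem minor_of_subdiv {m : ℕ} {X : SimpleGraph (Fin m)} {G : SimpleGraph V}
    {H : SimpleGraph N} {B : N → Set V} {c k r : ℕ} (hr : 12 * r < k)
    (hcontain : ContainsQuasiGeodesicSubdivGE G (c * k) X c)
    (hD : IsGraphDecomp G H B) (hB : ∀ h, radiusLE (G.induce (B h)) r) : IsMinorOf X H := by
  classical
  obtain ⟨Y, ⟨f, p, hf, hpath, hlen, hrev, hbr, hint, hverts, hedges⟩, hqg⟩ := hcontain
  have hK : ∀ a b, Y.spanningCoe.Adj a b →
      ∃ (u v : Fin m) (h : X.Adj u v), s(a, b) ∈ (p h).edges := by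
    intro a b hab
    have : s(a, b) ∈ Y.edgeSet := hab
    rw [hedges] at this
    exact this
  set E := c * (2 * r) with hE
  have hEk : 3 * E < c * k + 1 := by
    have : c * (12 * r) ≤ c * k := Nat.mul_le_mul_left c hr.le
    have : c * (12 * r) = 6 * E := by rw [hE]; ring
    omega
  have hfY : ∀ w, f w ∈ Y.verts := fun w => by rw [hverts]; exact Or.inl ⟨w, rfl⟩
  have hpY : ∀ u v (h : X.Adj u v), ∀ x ∈ (p h).support, x ∈ Y.verts := fun u v h x hx => by
    rw [hverts]; exact Or.inr ⟨u, v, h, hx⟩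
  have near : ∀ h x y, x ∈ Y.verts → y ∈ Y.verts → x ∈ B h → y ∈ B h →
      ∃ q : Y.spanningCoe.Walk x y, q.length ≤ E := by
    intro h x y hx hy hxB hyB
    obtain ⟨q, hq⟩ := bag_walk (hB h) hxB hyB
    exact qg_walk hqg hx hy q hq
  have far : ∀ u v, v ≠ u → ∀ q : Y.spanningCoe.Walk (f u) (f v), c * k + 1 ≤ q.length :=
    fun u v huv q => dist_branch hf hpath hlen hrev hbr hint hK huv q
  let S : Fin m → Set V := fun w =>
    {x | x ∈ Y.verts ∧ ∃ q : Y.spanningCoe.Walk (f w) x, q.length ≤ E}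
  let P : Fin m → Fin m → Set V := fun u v => {x | ∃ h : X.Adj u v, x ∈ (p h).support}
  have hfS : ∀ w, f w ∈ S w := fun w => ⟨hfY w, Walk.nil, by simp⟩
  have hYle : Y.spanningCoe ≤ G := Y.spanningCoe_le
  have hwalkY : ∀ a b (q : Y.spanningCoe.Walk a b), a ∈ Y.verts → ∀ z ∈ q.support,
      z ∈ Y.verts := by
    intro a b q
    induction q with
    | nil => intro h z hz; simp at hz; exact hz ▸ h
    | @cons a d b had q ih =>
      intro h z hz
      rw [Walk.support_cons, List.mem_cons] at hz
      rcases hz with rfl | hz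
      · exact h
      · exact ih (Y.edge_vert (Y.adj_symm had)) z hz
  have hSwalk : ∀ w x, x ∈ S w → RW G (S w) (f w) x := by
    rintro w x ⟨hx, q, hq⟩
    refine ⟨q.mapLe hYle, fun z hz => ?_⟩
    have hz' : z ∈ q.support := by simpa using hz
    exact ⟨hwalkY _ _ q (hfY w) z hz', q.takeUntil z hz',
      (q.length_takeUntil_le_length hz').trans hq⟩
  apply minor_of_sets X H (fun w => nodesOf B (S w)) (fun u v => nodesOf B (P u v))
  · intro w
    obtain ⟨h, hh⟩ := hD.1 (f w)
    exact ⟨h, f w, hfS w, hh⟩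
  · rintro w a ⟨x, hx, hxa⟩ b ⟨y, hy, hyb⟩
    obtain ⟨q, hq⟩ := (hSwalk w x hx).symm'.trans' (hSwalk w y hy)
    exact nodesOf_RW hD q hq a b hxa hyb
  · intro w w' hne
    rw [Set.disjoint_left]
    rintro h ⟨x, ⟨hxY, q, hq⟩, hxB⟩ ⟨y, ⟨hyY, q', hq'⟩, hyB⟩
    obtain ⟨q₂, hq₂⟩ := near h x y hxY hyY hxB hyB
    have := far w w' hne.symm ((q.append q₂).append q'.reverse)
    simp only [Walk.length_append, Walk.length_reverse] at this
    omega
  · rintro u v huv a ⟨x, ⟨h1, hx⟩, hxa⟩ b ⟨y, ⟨h2, hy⟩, hyb⟩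
    have hst : ∀ z ∈ (p huv).support, RW G (P u v) (f u) z := by
      intro z hz
      exact ⟨(p huv).takeUntil z hz, fun t ht =>
        ⟨huv, (p huv).support_takeUntil_subset_support hz ht⟩⟩
    obtain ⟨q, hq⟩ := (hst x hx).symm'.trans' (hst y hy)
    exact nodesOf_RW hD q hq a b hxa hyb
  · intro u v huv
    obtain ⟨h, hh⟩ := hD.1 (f u)
    exact ⟨h, ⟨f u, ⟨huv, by simp⟩, hh⟩, ⟨f u, hfS u, hh⟩⟩
  · intro u v huv
    obtain ⟨h, hh⟩ := hD.1 (f v)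
    exact ⟨h, ⟨f v, ⟨huv, by simp⟩, hh⟩, ⟨f v, hfS v, hh⟩⟩
  · intro u v huv w hwu hwv
    rw [Set.disjoint_left]
    rintro h ⟨x, ⟨_, hx⟩, hxB⟩ ⟨y, ⟨hyY, q', hq'⟩, hyB⟩
    obtain ⟨q₂, hq₂⟩ := near h x y (hpY u v huv x hx) hyY hxB hyB
    have hw : f w ∉ (p huv).support := fun hm => by
      rcases hbr huv w hm with h | h
      · exact hwu h
      · exact hwv h
    have hl : (q₂.append q'.reverse).length ≤ 2 * E := by
      simp only [Walk.length_append, Walk.length_reverse]; omega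
    rcases exit_path hrev hint hK huv (q₂.append q'.reverse) hx hw with hm | hm
    · have h1 := Walk.length_dropUntil_le_length _ hm
      have h2 := far u w hwu (Walk.dropUntil _ _ hm)
      omega
    · have h1 := Walk.length_dropUntil_le_length _ hm
      have h2 := far v w hwv (Walk.dropUntil _ _ hm)
      omega
  · rintro u v u' v' huv huv' hs h ⟨x, ⟨_, hx⟩, hxB⟩ ⟨y, ⟨_, hy⟩, hyB⟩
    have hxY := hpY u v huv x hx
    obtain ⟨q, hq⟩ := near h x y hxY (hpY u' v' huv' y hy) hxB hyB
    have hex : f u ∈ q.support ∨ f v ∈ q.support := by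
      by_cases hyP : y ∈ (p huv).support
      · rcases (hint huv huv' hs y hyP hy).1 with h1 | h1
        · left; rw [← h1]; simp
        · right; rw [← h1]; simp
      · exact exit_path hrev hint hK huv q hx hyP
    rcases hex with hm | hm
    · refine ⟨u, x, ⟨hxY, (q.takeUntil _ hm).reverse, ?_⟩, hxB⟩
      rw [Walk.length_reverse]
      exact (q.length_takeUntil_le_length hm).trans hq
    · refine ⟨v, x, ⟨hxY, (q.takeUntil _ hm).reverse, ?_⟩, hxB⟩
      rw [Walk.length_reverse]
      exact (q.length_takeUntil_le_length hm).trans hq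

/-- Let `ℋ` be a minor-closed class of graphs, `c k : ℕ`, and `X ∉ ℋ`.
If a graph `G` contains a `(≥ c·k)`-subdivision of `X` as a `c`-quasi-geodesic subgraph,
then the radial `ℋ`-width of `G` is at least `k / 12`. -/
theorem radial_width_lower_bound_of_quasi_geodesic_subdivision
    {V : Type*} [Fintype V] (ℋ : ∀ n : ℕ, SimpleGraph (Fin n) → Prop)
    (hmc : MinorClosed ℋ) (c k : ℕ) {m : ℕ} (X : SimpleGraph (Fin m)) (hX : ¬ ℋ m X)
    (G : SimpleGraph V) (hcontain : ContainsQuasiGeodesicSubdivGE G (c * k) X c) :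
    ∀ (n : ℕ) (Hg : SimpleGraph (Fin n)) (B : Fin n → Set V), ℋ n Hg →
      IsGraphDecomp G Hg B → ∀ r : ℕ, (∀ h, radiusLE (G.induce (B h)) r) →
      (k : ℚ) / 12 ≤ (r : ℚ) := by
  intro n Hg B hH hD r hB
  by_contra hlt
  push Not at hlt
  have hr : 12 * r < k := by
    rw [lt_div_iff₀ (by norm_num)] at hlt
    have : ((r * 12 : ℕ) : ℚ) < (k : ℚ) := by push_cast; exact hlt
    have : r * 12 < k := by exact_mod_cast this
    omega
  exact hX (hmc X Hg hH (minor_of_subdiv hr hcontain hD hB))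

end RadialPaper
end

section
/- Let k ∈ ℕ. If a connected graph G contains no (≥k)-subdivision of the triangle K³ as a geodesic subgraph and no (≥3k)-subdivision of the claw K_{1,3} as a 3-quasi-geodesic subgraph, then there exists a path P and a P-decomposition of G of radial width at most 18k + 2. -/
open SimpleGraph

namespace RadialPaper

variable {V W N : Type*}

/-- parity of a walk -/
def par {G : SimpleGraph V} (ω : V → V → ZMod 2) {u v : V} (w : G.Walk u v) : ZMod 2 :=
  (w.darts.map (fun d => ω d.fst d.snd)).sum

lemma par_append {G : SimpleGraph V} (ω : V → V → ZMod 2) {u v x : V} (w : G.Walk u v)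
    (w' : G.Walk v x) : par ω (w.append w') = par ω w + par ω w' := by
  simp [par, SimpleGraph.Walk.darts_append]

lemma par_reverse {G : SimpleGraph V} (ω : V → V → ZMod 2) (hω : ∀ a b, ω a b = ω b a)
    {u v : V} (w : G.Walk u v) : par ω w.reverse = par ω w := by
  simp only [par, SimpleGraph.Walk.darts_reverse, List.map_reverse, List.sum_reverse,
    List.map_map]
  congr 1
  apply List.map_congr_left
  intro d _
  simp [hω]

lemma par_getVert {G : SimpleGraph V} (ω : V → V → ZMod 2) {u v : V} (w : G.Walk u v) :
    par ω w = ∑ t ∈ Finset.range w.length, ω (w.getVert t) (w.getVert (t+1)) := by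
  induction w with
  | nil => simp [par]
  | cons h p ih =>
    rw [SimpleGraph.Walk.length_cons, Finset.sum_range_succ']
    simp only [SimpleGraph.Walk.getVert_cons_succ, SimpleGraph.Walk.getVert_zero]
    rw [← ih]
    simp [par, add_comm]

lemma exists_walk_seq (G : SimpleGraph V) (γ : ℕ → V) (i n : ℕ)
    (h : ∀ t, i ≤ t → t < i + n → G.Adj (γ t) (γ (t+1))) :
    ∃ w : G.Walk (γ i) (γ (i+n)), w.length = n ∧
      (∀ x, x ∈ w.support ↔ ∃ t, i ≤ t ∧ t ≤ i + n ∧ x = γ t) ∧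
      (∀ e, e ∈ w.edges ↔ ∃ t, i ≤ t ∧ t < i + n ∧ e = s(γ t, γ (t+1))) ∧
      ((∀ s t, i ≤ s → s < t → t ≤ i + n → γ s ≠ γ t) → w.IsPath) ∧
      (∀ ω : V → V → ZMod 2, par ω w = ∑ t ∈ Finset.range n, ω (γ (i+t)) (γ (i+t+1))) := by
  induction n with
  | zero =>
    refine ⟨SimpleGraph.Walk.nil, rfl, ?_, ?_, ?_, ?_⟩
    · intro x
      simp only [SimpleGraph.Walk.support_nil, List.mem_singleton]
      constructor
      · rintro rfl; exact ⟨i, le_rfl, by omega, rfl⟩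
      · rintro ⟨t, h1, h2, rfl⟩
        congr 1; omega
    · intro e
      simp only [SimpleGraph.Walk.edges_nil, List.not_mem_nil, false_iff]
      rintro ⟨t, h1, h2, _⟩; omega
    · intro _; exact SimpleGraph.Walk.IsPath.nil
    · intro ω; simp [par]
  | succ n ih =>
    obtain ⟨w, hl, hs, he, hp, hω⟩ := ih (fun t h1 h2 => h t h1 (by omega))
    have ha : G.Adj (γ (i+n)) (γ (i+(n+1))) := h (i+n) (by omega) (by omega)
    refine ⟨w.concat ha, ?_, ?_, ?_, ?_, ?_⟩
    · simp [hl]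
    · intro x
      rw [SimpleGraph.Walk.support_concat, List.mem_append, hs,
        List.mem_singleton]
      constructor
      · rintro (⟨t, h1, h2, rfl⟩ | rfl)
        · exact ⟨t, h1, by omega, rfl⟩
        · exact ⟨_, by omega, le_rfl, rfl⟩
      · rintro ⟨t, h1, h2, rfl⟩
        rcases Nat.lt_or_ge (i+n) t with h3 | h3
        · right; congr 1; omega
        · left; exact ⟨t, h1, h3, rfl⟩
    · intro e
      rw [SimpleGraph.Walk.edges_concat, List.concat_eq_append, List.mem_append, he,
        List.mem_singleton]
      constructor
      · rintro (⟨t, h1, h2, rfl⟩ | rfl)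
        · exact ⟨t, h1, by omega, rfl⟩
        · exact ⟨i+n, by omega, by omega, rfl⟩
      · rintro ⟨t, h1, h2, rfl⟩
        rcases Nat.lt_or_ge t (i+n) with h3 | h3
        · left; exact ⟨t, h1, h3, rfl⟩
        · right
          have : t = i + n := by omega
          subst this; rfl
    · intro hinj
      refine SimpleGraph.Walk.IsPath.concat (hp fun s t h1 h2 h3 => hinj s t h1 h2 (by omega)) ?_ ha
      rw [hs]
      rintro ⟨t, h1, h2, h3⟩
      exact hinj t (i+(n+1)) h1 (by omega) le_rfl h3.symm
    · intro ω
      rw [Finset.sum_range_succ, ← hω]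
      simp [par, SimpleGraph.Walk.darts_concat]
      rfl

lemma edist_seq {S : Set V} (H : SimpleGraph S) (γ : ℕ → V) (i n : ℕ)
    (h : ∀ t, i ≤ t → t < i + n → ∃ h1 h2, H.Adj ⟨γ t, h1⟩ ⟨γ (t+1), h2⟩)
    (hi : γ i ∈ S) (hn : γ (i+n) ∈ S) : H.edist ⟨γ i, hi⟩ ⟨γ (i+n), hn⟩ ≤ (n : ℕ∞) := by
  induction n with
  | zero => simp
  | succ n ih =>
    obtain ⟨h1, h2, ha⟩ := h (i+n) (by omega) (by omega)
    have := ih (fun t h1 h2 => h t h1 (by omega)) h1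
    refine (SimpleGraph.edist_triangle (v := ⟨γ (i+n), h1⟩)).trans ?_
    push_cast
    refine add_le_add this ?_
    exact (SimpleGraph.edist_eq_one_iff_adj.2 ha).le

lemma dist_seq {G : SimpleGraph V} (hG : G.Connected) (γ : ℕ → V) (i n : ℕ)
    (h : ∀ t, i ≤ t → t < i + n → G.Adj (γ t) (γ (t+1))) : G.dist (γ i) (γ (i+n)) ≤ n := by
  obtain ⟨w, hw, _⟩ := exists_walk_seq G γ i n h
  have := SimpleGraph.dist_le w
  omega

/-- a geodesic sequence -/
def GeoSeq (G : SimpleGraph V) (γ : ℕ → V) (D : ℕ) : Prop :=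
  ∀ i j, i ≤ j → j ≤ D → G.dist (γ i) (γ j) = j - i

lemma GeoSeq.adj {G : SimpleGraph V} {γ : ℕ → V} {D : ℕ} (h : GeoSeq G γ D) (t : ℕ) (ht : t < D) :
    G.Adj (γ t) (γ (t+1)) := by
  rw [← SimpleGraph.dist_eq_one_iff_adj, h t (t+1) (by omega) (by omega)]; omega

lemma exists_geo {G : SimpleGraph V} (hG : G.Connected) (u v : V) :
    ∃ γ : ℕ → V, γ 0 = u ∧ γ (G.dist u v) = v ∧ GeoSeq G γ (G.dist u v) := by
  obtain ⟨w, hw⟩ := hG.exists_walk_length_eq_dist u v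
  have hadj : ∀ t, t < G.dist u v → G.Adj (w.getVert t) (w.getVert (t+1)) := fun t ht =>
    w.adj_getVert_succ (by omega)
  refine ⟨w.getVert, by simp, by rw [← hw]; simp, ?_⟩
  intro i j hij hj
  have h1 := dist_seq hG w.getVert i (j-i) (fun t _ _ => hadj t (by omega))
  have h2 := dist_seq hG w.getVert 0 i (fun t _ _ => hadj t (by omega))
  have h3 := dist_seq hG w.getVert j (G.dist u v - j) (fun t _ _ => hadj t (by omega))
  have e1 : i + (j - i) = j := by omega
  have e3 : j + (G.dist u v - j) = w.length := by omega
  rw [e1] at h1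
  rw [e3, w.getVert_length] at h3
  rw [zero_add, w.getVert_zero] at h2
  have t1 := hG.dist_triangle (u := u) (v := w.getVert i) (w := v)
  have t2 := hG.dist_triangle (u := w.getVert i) (v := w.getVert j) (w := v)
  omega

lemma subdiv_mk {G : SimpleGraph V} {m : ℕ} (k : ℕ) (X : SimpleGraph (Fin m)) (f : Fin m → V)
    (hf : Function.Injective f)
    (q : ∀ u v, u < v → X.Adj u v → G.Walk (f u) (f v))
    (h1 : ∀ u v l a, (q u v l a).IsPath)
    (h2 : ∀ u v l a, k + 1 ≤ (q u v l a).length)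
    (h3 : ∀ u v l a w, f w ∈ (q u v l a).support → w = u ∨ w = v)
    (h4 : ∀ u v l a u' v' l' a', (u ≠ u' ∨ v ≠ v') → ∀ x, x ∈ (q u v l a).support →
      x ∈ (q u' v' l' a').support → (x = f u ∨ x = f v) ∧ (x = f u' ∨ x = f v')) :
    ∃ Y : G.Subgraph, IsSubdivGE k X Y ∧
      (Y.verts = Set.range f ∪ {x | ∃ u v l a, x ∈ (q u v l a).support}) ∧
      ∀ x y, Y.Adj x y ↔ ∃ u v l a, s(x,y) ∈ (q u v l a).edges := by
  classical
  let p : ∀ ⦃u v : Fin m⦄, X.Adj u v → G.Walk (f u) (f v) := fun u v a =>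
    if l : u < v then q u v l a else
      (q v u (lt_of_le_of_ne (not_lt.1 l) a.ne.symm) a.symm).reverse
  have pl : ∀ ⦃u v : Fin m⦄ (a : X.Adj u v) (l : u < v), p a = q u v l a := by
    intro u v a l; simp [p, l]
  have pg : ∀ ⦃u v : Fin m⦄ (a : X.Adj u v) (l : v < u), p a = (q v u l a.symm).reverse := by
    intro u v a l; simp [p, l.not_gt]
  have key : ∀ ⦃u v : Fin m⦄ (a : X.Adj u v), u < v ∨ v < u := fun u v a =>
    lt_or_gt_of_ne a.ne
  have hsup : ∀ x, (∃ (u v : Fin m) (a : X.Adj u v), x ∈ (p a).support) ↔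
      ∃ u v l a, x ∈ (q u v l a).support := by
    intro x
    constructor
    · rintro ⟨u, v, a, hx⟩
      rcases key a with l | l
      · rw [pl a l] at hx; exact ⟨u, v, l, a, hx⟩
      · rw [pg a l] at hx; exact ⟨v, u, l, a.symm, by simpa using hx⟩
    · rintro ⟨u, v, l, a, hx⟩
      exact ⟨u, v, a, by rwa [pl a l]⟩
  have hedg : ∀ x, (∃ (u v : Fin m) (a : X.Adj u v), x ∈ (p a).edges) ↔
      ∃ u v l a, x ∈ (q u v l a).edges := by
    intro x
    constructor
    · rintro ⟨u, v, a, hx⟩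
      rcases key a with l | l
      · rw [pl a l] at hx; exact ⟨u, v, l, a, hx⟩
      · rw [pg a l] at hx; exact ⟨v, u, l, a.symm, by simpa using hx⟩
    · rintro ⟨u, v, l, a, hx⟩
      exact ⟨u, v, a, by rwa [pl a l]⟩
  let Y : G.Subgraph :=
    { verts := Set.range f ∪ {x | ∃ u v l a, x ∈ (q u v l a).support}
      Adj := fun x y => ∃ u v l a, s(x,y) ∈ (q u v l a).edges
      adj_sub := by
        rintro x y ⟨u, v, l, a, h⟩
        exact SimpleGraph.Walk.adj_of_mem_edges _ h
      edge_vert := by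
        rintro x y ⟨u, v, l, a, h⟩
        exact Or.inr ⟨u, v, l, a, SimpleGraph.Walk.fst_mem_support_of_mem_edges _ h⟩
      symm := by
        constructor
        rintro x y ⟨u, v, l, a, h⟩
        exact ⟨u, v, l, a, by rwa [Sym2.eq_swap]⟩ }
  refine ⟨Y, ⟨f, p, hf, ?_, ?_, ?_, ?_, ?_, ?_, ?_⟩, rfl, fun _ _ => Iff.rfl⟩
  · intro u v a
    rcases key a with l | l
    · rw [pl a l]; apply h1
    · rw [pg a l]; exact (h1 _ _ _ _).reverse
  · intro u v a
    rcases key a with l | l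
    · rw [pl a l]; apply h2
    · rw [pg a l, SimpleGraph.Walk.length_reverse]; apply h2
  · intro u v a
    rcases key a with l | l
    · rw [pl a l, pg a.symm l]
    · rw [pg a l, pl a.symm l, SimpleGraph.Walk.reverse_reverse]
  · intro u v a w hw
    rcases key a with l | l
    · rw [pl a l] at hw; exact h3 _ _ _ _ _ hw
    · rw [pg a l] at hw; exact (h3 _ _ _ _ _ (by simpa using hw)).symm
  · intro u v u' v' a a' hne x hx hx'
    have hne' : ¬ ((u = u' ∧ v = v') ∨ (u = v' ∧ v = u')) := by
      simpa [Sym2.eq_iff] using hne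
    rcases key a with l | l <;> rcases key a' with l' | l'
    · rw [pl a l] at hx; rw [pl a' l'] at hx'
      exact h4 _ _ _ _ _ _ _ _ (by tauto) x hx hx'
    · rw [pl a l] at hx; rw [pg a' l', SimpleGraph.Walk.support_reverse, List.mem_reverse] at hx'
      have := h4 _ _ _ _ _ _ _ _ (by tauto) x hx hx'
      tauto
    · rw [pg a l, SimpleGraph.Walk.support_reverse, List.mem_reverse] at hx; rw [pl a' l'] at hx'
      have := h4 _ _ _ _ _ _ _ _ (by tauto) x hx hx'
      tauto
    · rw [pg a l, SimpleGraph.Walk.support_reverse, List.mem_reverse] at hx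
      rw [pg a' l', SimpleGraph.Walk.support_reverse, List.mem_reverse] at hx'
      have := h4 _ _ _ _ _ _ _ _ (by tauto) x hx hx'
      tauto
  · ext x
    simp only [Y, Set.mem_union, Set.mem_ofPred_eq, hsup]
  · ext e
    induction e using Sym2.ind with
    | _ x y =>
      rw [SimpleGraph.Subgraph.mem_edgeSet, Set.mem_ofPred_eq, hedg]

lemma geo_cycle {G : SimpleGraph V} (hG : G.Connected) (k n : ℕ) (γ : ℕ → V)
    (hn : 3 * (k + 1) ≤ n) (h0 : γ 0 = γ n) (hadj : ∀ t, t < n → G.Adj (γ t) (γ (t+1)))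
    (hd : ∀ i j, i ≤ j → j ≤ n → j - i ≤ G.dist (γ i) (γ j) ∨ n - (j - i) ≤ G.dist (γ i) (γ j)) :
    ContainsQuasiGeodesicSubdivGE G k triangleGraph 1 := by
  have inj1 : ∀ i j, i ≤ j → j ≤ n → γ i = γ j → i = j ∨ (i = 0 ∧ j = n) := by
    intro i j hij hj he
    have := hd i j hij hj
    rw [he, SimpleGraph.dist_self] at this
    omega
  have inj : ∀ i j, i ≤ n → j ≤ n → γ i = γ j → i = j ∨ (i = 0 ∧ j = n) ∨ (i = n ∧ j = 0) := by
    intro i j hi hj he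
    rcases le_total i j with h | h
    · rcases inj1 i j h hj he with h | h <;> omega
    · rcases inj1 j i h hi he.symm with h | h <;> omega
  obtain ⟨t, rfl⟩ : ∃ t, t = k + 1 := ⟨_, rfl⟩
  set t := k + 1 with ht
  have hseg : ∀ i j, i < j → j ≤ n → (j < n ∨ 0 < i) → ∃ w : G.Walk (γ i) (γ j), w.length = j - i ∧
      (∀ x, x ∈ w.support ↔ ∃ t, i ≤ t ∧ t ≤ j ∧ x = γ t) ∧
      (∀ e, e ∈ w.edges ↔ ∃ t, i ≤ t ∧ t < j ∧ e = s(γ t, γ (t+1))) ∧ w.IsPath := by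
    intro i j hij hj hor
    obtain ⟨l, rfl⟩ : ∃ l, j = i + l := ⟨j - i, by omega⟩
    obtain ⟨w, h1, h2, h3, h4, _⟩ := exists_walk_seq G γ i l (fun t _ _ => hadj t (by omega))
    refine ⟨w, by omega, h2, h3, h4 ?_⟩
    intro s t hs hst hte he
    rcases inj s t (by omega) (by omega) he with h | h | h <;> omega
  let g : Fin 3 → ℕ := ![0, t, 2 * t]
  let f : Fin 3 → V := fun u => γ (g u)
  let lo : Fin 3 → Fin 3 → ℕ := fun u v => if v = 1 then 0 else if u = 1 then t else 2 * t
  let hi : Fin 3 → Fin 3 → ℕ := fun u v => if v = 1 then t else if u = 1 then 2 * t else n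
  have hq : ∀ u v : Fin 3, u < v → triangleGraph.Adj u v → ∃ w : G.Walk (f u) (f v),
      w.IsPath ∧ k + 1 ≤ w.length ∧
      (∀ x, x ∈ w.support ↔ ∃ t, lo u v ≤ t ∧ t ≤ hi u v ∧ x = γ t) ∧
      (∀ e, e ∈ w.edges ↔ ∃ t, lo u v ≤ t ∧ t < hi u v ∧ e = s(γ t, γ (t+1))) := by
    intro u v l _
    obtain ⟨w1, a1, b1, c1, d1⟩ := hseg 0 t (by omega) (by omega) (by omega)
    obtain ⟨w2, a2, b2, c2, d2⟩ := hseg t (2*t) (by omega) (by omega) (by omega)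
    obtain ⟨w3, a3, b3, c3, d3⟩ := hseg (2*t) n (by omega) (by omega) (by omega)
    have W3 : ∃ w : G.Walk (γ 0) (γ (2*t)), w.IsPath ∧ k + 1 ≤ w.length ∧
        (∀ x, x ∈ w.support ↔ ∃ s, 2*t ≤ s ∧ s ≤ n ∧ x = γ s) ∧
        (∀ e, e ∈ w.edges ↔ ∃ s, 2*t ≤ s ∧ s < n ∧ e = s(γ s, γ (s+1))) := by
      rw [h0]
      refine ⟨w3.reverse, d3.reverse, ?_, ?_, ?_⟩
      · rw [SimpleGraph.Walk.length_reverse]; omega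
      · intro x; rw [SimpleGraph.Walk.support_reverse, List.mem_reverse]; exact b3 x
      · intro x; rw [SimpleGraph.Walk.edges_reverse, List.mem_reverse]; exact c3 x
    have l1 : k + 1 ≤ w1.length := by omega
    have l2 : k + 1 ≤ w2.length := by omega
    fin_cases u <;> fin_cases v <;> try (exfalso; revert l; decide)
    · exact ⟨w1, d1, l1, b1, c1⟩
    · exact W3
    · exact ⟨w2, d2, l2, b2, c2⟩
  choose q q1 q2 q3 q4 using hq
  have hgn : ∀ u, g u < n := by
    intro u; fin_cases u <;> simp [g] <;> omega
  have hhi : ∀ u v, hi u v ≤ n := by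
    intro u v; simp only [hi]; split_ifs <;> omega
  have ex := subdiv_mk k triangleGraph f ?_ q q1 q2 ?_ ?_
  · obtain ⟨Y, hY, hYv, hYa⟩ := ex
    refine ⟨Y, hY, ?_⟩
    have hv : ∀ x, x ∈ Y.verts → ∃ i, i ≤ n ∧ x = γ i := by
      intro x hx
      rw [hYv] at hx
      rcases hx with ⟨u, rfl⟩ | ⟨u, v, l, a, hx⟩
      · exact ⟨_, (hgn u).le, rfl⟩
      · rw [q3] at hx
        obtain ⟨s, _, hs, rfl⟩ := hx
        exact ⟨s, hs.trans (hhi u v), rfl⟩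
    have hA : ∀ s, s < n → Y.Adj (γ s) (γ (s+1)) := by
      intro s hs
      rw [hYa]
      rcases Nat.lt_or_ge s t with h1 | h1
      · exact ⟨0, 1, by decide, by simp [triangleGraph], (q4 _ _ _ _ _).2 ⟨s, by simp [lo], by simpa [hi] using h1, rfl⟩⟩
      rcases Nat.lt_or_ge s (2*t) with h2 | h2
      · exact ⟨1, 2, by decide, by simp [triangleGraph], (q4 _ _ _ _ _).2 ⟨s, by simpa [lo] using h1, by simpa [hi] using h2, rfl⟩⟩
      · exact ⟨0, 2, by decide, by simp [triangleGraph], (q4 _ _ _ _ _).2 ⟨s, by simpa [lo] using h2, by simpa [hi] using hs, rfl⟩⟩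
    have hYd : ∀ i j (hij : i ≤ j) (hj : j ≤ n) (hi : γ i ∈ Y.verts) (hj : γ j ∈ Y.verts),
        Y.coe.edist ⟨γ i, hi⟩ ⟨γ j, hj⟩ ≤ ((j - i : ℕ) : ℕ∞) := by
      intro i j hij hjn hi hj
      obtain ⟨l, rfl⟩ : ∃ l, j = i + l := ⟨j - i, by omega⟩
      rw [show i + l - i = l by omega]
      exact edist_seq Y.coe γ i l (fun s _ _ => ⟨(hA s (by omega)).fst_mem,
        (hA s (by omega)).snd_mem, hA s (by omega)⟩) hi hj
    have h0v : γ 0 ∈ Y.verts := (hA 0 (by omega)).fst_mem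
    have main : ∀ i j (hij : i ≤ j) (hj : j ≤ n) (hi : γ i ∈ Y.verts) (hj : γ j ∈ Y.verts),
        Y.coe.edist ⟨γ i, hi⟩ ⟨γ j, hj⟩ ≤ ((G.dist (γ i) (γ j) : ℕ) : ℕ∞) := by
      intro i j hij hjn hi hj
      rcases hd i j hij hjn with h | h
      · exact (hYd i j hij hjn hi hj).trans (by exact_mod_cast h)
      · have e1 := hYd 0 i (by omega) (by omega) h0v hi
        have e2 := hYd j n (by omega) (by omega) hj (h0 ▸ h0v)
        have e3 : (⟨γ n, h0 ▸ h0v⟩ : Y.verts) = ⟨γ 0, h0v⟩ := Subtype.ext h0.symm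
        rw [e3] at e2
        rw [SimpleGraph.edist_comm] at e1 e2
        refine (SimpleGraph.edist_triangle (v := ⟨γ 0, h0v⟩)).trans ((add_le_add e1 e2).trans ?_)
        have e4 : i - 0 + (n - j) ≤ G.dist (γ i) (γ j) := by omega
        exact_mod_cast e4
    rintro ⟨u, hu⟩ ⟨v, hv'⟩
    obtain ⟨i, hi, rfl⟩ := hv u hu
    obtain ⟨j, hj, rfl⟩ := hv v hv'
    have : G.edist (γ i) (γ j) = (G.dist (γ i) (γ j) : ℕ) := by
      rw [SimpleGraph.dist, ENat.natCast_toNat]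
      exact SimpleGraph.edist_ne_top_iff_reachable.2 (hG.preconnected _ _)
    simp only [Nat.cast_one, one_mul, this]
    rcases le_total i j with h | h
    · exact main i j h hj hu hv'
    · rw [SimpleGraph.edist_comm, SimpleGraph.dist_comm]
      exact main j i h hi hv' hu
  · intro u v huv
    have := inj _ _ (hgn u).le (hgn v).le huv
    have h1 := hgn u
    have h2 := hgn v
    have : g u = g v := by omega
    fin_cases u <;> fin_cases v <;> simp [g] at this ⊢ <;> omega
  · intro u v l a w hw
    rw [q3] at hw
    obtain ⟨s, hs1, hs2, hs⟩ := hw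
    have := inj _ _ (hgn w).le (hs2.trans (hhi u v)) hs
    fin_cases u <;> fin_cases v <;> (try (exfalso; revert l; decide)) <;> fin_cases w <;>
      simp [g, lo, hi] at this hs1 hs2 ⊢ <;> omega
  · intro u v l a u' v' l' a' hne x hx hx'
    rw [q3] at hx hx'
    obtain ⟨s, hs1, hs2, rfl⟩ := hx
    obtain ⟨s', hs1', hs2', hs⟩ := hx'
    have hh := inj _ _ (hs2.trans (hhi u v)) (hs2'.trans (hhi u' v')) hs
    have key : ∀ w : Fin 3, (s = g w ∨ (s = n ∧ g w = 0)) → γ s = f w := by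
      rintro w (h | ⟨h, h'⟩)
      · rw [h]
      · simp only [f]; rw [h, h', h0]
    have : ((s = g u ∨ (s = n ∧ g u = 0)) ∨ (s = g v ∨ (s = n ∧ g v = 0))) ∧
      ((s = g u' ∨ (s = n ∧ g u' = 0)) ∨ (s = g v' ∨ (s = n ∧ g v' = 0))) := by
      clear key hs q q1 q2 q3 q4
      fin_cases u <;> fin_cases v <;> (try (exfalso; revert l; decide)) <;>
      fin_cases u' <;> fin_cases v' <;> (try (exfalso; revert l'; decide)) <;>
      simp [g, lo, hi] at hh hs1 hs2 hs1' hs2' hne ⊢ <;> omega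
    exact ⟨this.1.imp (key _) (key _), this.2.imp (key _) (key _)⟩

lemma geo_claw {G : SimpleGraph V} (hG : G.Connected) (K D c m : ℕ) (γ β : ℕ → V)
    (hγ : GeoSeq G γ D) (hβ : GeoSeq G β m) (h0 : β 0 = γ c)
    (hc1 : K + 1 ≤ c) (hc2 : c + (K + 1) ≤ D) (hm : K + 1 ≤ m)
    (hclose : ∀ i j, i ≤ m → j ≤ D → i ≤ G.dist (β i) (γ j)) :
    ContainsQuasiGeodesicSubdivGE G K clawGraph 3 := by
  have hed : ∀ x y, G.edist x y = (G.dist x y : ℕ) := by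
    intro x y
    rw [SimpleGraph.dist, ENat.natCast_toNat]
    exact SimpleGraph.edist_ne_top_iff_reachable.2 (hG.preconnected _ _)
  have injγ : ∀ i j, i ≤ D → j ≤ D → γ i = γ j → i = j := by
    intro i j hi hj he
    rcases le_total i j with h | h
    · have := hγ i j h hj
      rw [he, SimpleGraph.dist_self] at this; omega
    · have := hγ j i h hi
      rw [he, SimpleGraph.dist_self] at this; omega
  have injβ : ∀ i j, i ≤ m → j ≤ m → β i = β j → i = j := by
    intro i j hi hj he
    rcases le_total i j with h | h
    · have := hβ i j h hj
      rw [he, SimpleGraph.dist_self] at this; omega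
    · have := hβ j i h hi
      rw [he, SimpleGraph.dist_self] at this; omega
  have inj : ∀ i j, i ≤ m → j ≤ D → β i = γ j → i = 0 ∧ j = c := by
    intro i j hi hj he
    have := hclose i j hi hj
    rw [he, SimpleGraph.dist_self] at this
    have h : i = 0 := by omega
    subst h
    exact ⟨rfl, (injγ _ _ hj (by omega) (he.symm.trans h0))⟩
  obtain ⟨w1, a1, b1, c1, d1, _⟩ := exists_walk_seq G β 0 m (fun t _ _ => hβ.adj t (by omega))
  obtain ⟨w2, a2, b2, c2, d2, _⟩ := exists_walk_seq G γ 0 c (fun t _ _ => hγ.adj t (by omega))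
  have W1 : ∃ w : G.Walk (γ c) (β m), w.IsPath ∧ K + 1 ≤ w.length ∧
      (∀ x, x ∈ w.support ↔ ∃ t, t ≤ m ∧ x = β t) ∧
      (∀ e, e ∈ w.edges ↔ ∃ t, t < m ∧ e = s(β t, β (t+1))) := by
    rw [← h0]
    rw [← zero_add m]
    refine ⟨w1, d1 ?_, by omega, ?_, ?_⟩
    · exact (fun s t _ h1 h2 h3 => by
          have := injβ s t (by omega) (by omega) h3; omega)
    · intro x; simp [b1]
    · intro x; simp [c1]
  have W2 : ∃ w : G.Walk (γ c) (γ 0), w.IsPath ∧ K + 1 ≤ w.length ∧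
      (∀ x, x ∈ w.support ↔ ∃ t, t ≤ c ∧ x = γ t) ∧
      (∀ e, e ∈ w.edges ↔ ∃ t, t < c ∧ e = s(γ t, γ (t+1))) := by
    rw [← zero_add c]
    refine ⟨w2.reverse, (d2 ?_).reverse, ?_, ?_, ?_⟩
    · exact (fun s t _ h1 h2 h3 => by
          have := injγ s t (by omega) (by omega) h3; omega)
    · rw [SimpleGraph.Walk.length_reverse]; omega
    · intro x; simp [b2]
    · intro x; simp [c2]
  have W3 : ∃ w : G.Walk (γ c) (γ D), w.IsPath ∧ K + 1 ≤ w.length ∧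
      (∀ x, x ∈ w.support ↔ ∃ t, c ≤ t ∧ t ≤ D ∧ x = γ t) ∧
      (∀ e, e ∈ w.edges ↔ ∃ t, c ≤ t ∧ t < D ∧ e = s(γ t, γ (t+1))) := by
    obtain ⟨L, hL⟩ : ∃ L, D = c + L := ⟨D - c, by omega⟩
    subst hL
    obtain ⟨w3, a3, b3, c3, d3, _⟩ := exists_walk_seq G γ c L (fun t _ _ => hγ.adj t (by omega))
    refine ⟨w3, d3 ?_, by omega, b3, c3⟩
    · exact (fun s t _ h1 h2 h3 => by
          have := injγ s t (by omega) (by omega) h3; omega)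
  let f : Fin 4 → V := ![γ c, β m, γ 0, γ D]
  let S : Fin 4 → V → Prop := fun v x => ![True, ∃ t, t ≤ m ∧ x = β t, ∃ t, t ≤ c ∧ x = γ t,
    ∃ t, c ≤ t ∧ t ≤ D ∧ x = γ t] v
  let E : Fin 4 → Sym2 V → Prop := fun v x => ![True, ∃ t, t < m ∧ x = s(β t, β (t+1)),
    ∃ t, t < c ∧ x = s(γ t, γ (t+1)), ∃ t, c ≤ t ∧ t < D ∧ x = s(γ t, γ (t+1))] v
  have hu0 : ∀ u v : Fin 4, u < v → clawGraph.Adj u v → u = 0 := by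
    intro u v l a
    simp only [clawGraph, SimpleGraph.fromRel_adj] at a
    rcases a.2 with h | h
    · exact h
    · subst h; exact absurd l (by simp)
  have hq : ∀ u v : Fin 4, u < v → clawGraph.Adj u v → ∃ w : G.Walk (f u) (f v),
      w.IsPath ∧ K + 1 ≤ w.length ∧ (∀ x, x ∈ w.support ↔ S v x) ∧
      (∀ e, e ∈ w.edges ↔ E v e) := by
    intro u v l a
    have := hu0 u v l a
    subst this
    fin_cases v
    · exact absurd l (by simp)
    · exact W1
    · exact W2
    · exact W3
  choose q q1 q2 q3 q4 using hq
  have hS : ∀ u v x, u ≠ 0 → v ≠ 0 → u ≠ v → S u x → S v x → x = γ c := by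
    intro u v x hu hv huv h1 h2
    fin_cases u <;> fin_cases v <;> simp [S] at hu hv huv h1 h2
    all_goals
      first
      | (obtain ⟨s, hs, rfl⟩ := h1)
      | (obtain ⟨s, hs, hs', rfl⟩ := h1)
    all_goals
      first
      | (obtain ⟨s', ht, he⟩ := h2)
      | (obtain ⟨s', ht, ht', he⟩ := h2)
    · have := inj s s' (by omega) (by omega) he; rw [this.1, h0]
    · have := inj s s' (by omega) (by omega) he.2; rw [this.1, h0]
    · have := inj s' s (by omega) (by omega) he.symm; rw [this.2]
    · have := injγ s s' (by omega) (by omega) he.2; congr 1; omega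
    · have := inj s' s (by omega) (by omega) he.symm; rw [this.2]
    · have := injγ s s' (by omega) (by omega) he; congr 1; omega
  have hf : Function.Injective f := by
    have e1 : ∀ j, j ≤ D → β m ≠ γ j := fun j hj he => by
      have := inj m j le_rfl hj he; omega
    have e2 : ∀ i j, i ≤ D → j ≤ D → i ≠ j → γ i ≠ γ j := fun i j hi hj hij he => hij (injγ i j hi hj he)
    intro u v huv
    fin_cases u <;> fin_cases v <;> simp [f] at huv ⊢
    · exact e1 _ (by omega) huv.symm
    · exact e2 _ _ (by omega) (by omega) (by omega) huv
    · exact e2 _ _ (by omega) (by omega) (by omega) huv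
    · exact e1 _ (by omega) huv
    · exact e1 _ (by omega) huv
    · exact e1 _ (by omega) huv
    · exact e2 _ _ (by omega) (by omega) (by omega) huv
    · exact e1 _ (by omega) huv.symm
    · exact e2 _ _ (by omega) (by omega) (by omega) huv
    · exact e2 _ _ (by omega) (by omega) (by omega) huv
    · exact e1 _ (by omega) huv.symm
    · exact e2 _ _ (by omega) (by omega) (by omega) huv
  have hSf : ∀ v, S v (f v) := by
    intro v
    fin_cases v <;> simp [S, f]
    · exact ⟨m, le_rfl, rfl⟩
    · exact ⟨0, by omega, rfl⟩
    · exact ⟨D, by omega, by omega, rfl⟩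
  have hadj0 : ∀ v : Fin 4, v ≠ 0 → clawGraph.Adj 0 v := by
    intro v hv
    simp [clawGraph, SimpleGraph.fromRel_adj, hv.symm]
  have ex := subdiv_mk K clawGraph f hf q q1 q2 ?_ ?_
  · obtain ⟨Y, hY, hYv, hYa⟩ := ex
    refine ⟨Y, hY, ?_⟩
    have hv : ∀ x, x ∈ Y.verts → (∃ i, i ≤ m ∧ x = β i) ∨ (∃ i, i ≤ D ∧ x = γ i) := by
      intro x hx
      have hSx : ∀ v, v ≠ 0 → S v x → (∃ i, i ≤ m ∧ x = β i) ∨ (∃ i, i ≤ D ∧ x = γ i) := by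
        intro v hv hx
        fin_cases v <;> simp [S] at hv hx
        · exact Or.inl hx
        · obtain ⟨t, h1, h2⟩ := hx; exact Or.inr ⟨t, by omega, h2⟩
        · obtain ⟨t, h1, h2, h3⟩ := hx; exact Or.inr ⟨t, by omega, h3⟩
      rw [hYv] at hx
      rcases hx with ⟨u, rfl⟩ | ⟨u, v, l, a, hx⟩
      · by_cases hu : u = 0
        · subst hu; exact Or.inr ⟨c, by omega, rfl⟩
        · exact hSx u hu (hSf u)
      · rw [q3] at hx
        exact hSx v (by rintro rfl; exact absurd l (by simp)) hx
    have hAβ : ∀ s, s < m → Y.Adj (β s) (β (s+1)) := by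
      intro s hs
      rw [hYa]
      exact ⟨0, 1, by decide, hadj0 _ (by decide), (q4 _ _ _ _ _).2 ⟨s, hs, rfl⟩⟩
    have hAγ : ∀ s, s < D → Y.Adj (γ s) (γ (s+1)) := by
      intro s hs
      rw [hYa]
      rcases Nat.lt_or_ge s c with h | h
      · exact ⟨0, 2, by decide, hadj0 _ (by decide), (q4 _ _ _ _ _).2 ⟨s, h, rfl⟩⟩
      · exact ⟨0, 3, by decide, hadj0 _ (by decide), (q4 _ _ _ _ _).2 ⟨s, h, hs, rfl⟩⟩
    have hd : ∀ (α : ℕ → V) (N : ℕ) (_ : ∀ s, s < N → Y.Adj (α s) (α (s+1))),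
        ∀ i j (_ : i ≤ j) (_ : j ≤ N) (hi : α i ∈ Y.verts) (hj : α j ∈ Y.verts),
        Y.coe.edist ⟨α i, hi⟩ ⟨α j, hj⟩ ≤ ((j - i : ℕ) : ℕ∞) := by
      intro α N hA i j hij hjn hi hj
      obtain ⟨l, rfl⟩ : ∃ l, j = i + l := ⟨j - i, by omega⟩
      rw [show i + l - i = l by omega]
      exact edist_seq Y.coe α i l (fun s _ _ => ⟨(hA s (by omega)).fst_mem,
        (hA s (by omega)).snd_mem, hA s (by omega)⟩) hi hj
    have hsame : ∀ (α : ℕ → V) (N : ℕ) (_ : GeoSeq G α N) (_ : ∀ s, s < N → Y.Adj (α s) (α (s+1))),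
        ∀ i j (_ : i ≤ N) (_ : j ≤ N) (hi : α i ∈ Y.verts) (hj : α j ∈ Y.verts),
        Y.coe.edist ⟨α i, hi⟩ ⟨α j, hj⟩ ≤ ((G.dist (α i) (α j) : ℕ) : ℕ∞) := by
      intro α N hα hA i j hi' hj' hi hj
      rcases le_total i j with h | h
      · rw [hα i j h hj']; exact hd α N hA i j h hj' hi hj
      · rw [SimpleGraph.dist_comm, SimpleGraph.edist_comm, hα j i h hi']
        exact hd α N hA j i h hi' hj hi
    have hmix : ∀ i j (_ : i ≤ m) (_ : j ≤ D) (hi : β i ∈ Y.verts) (hj : γ j ∈ Y.verts),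
        Y.coe.edist ⟨β i, hi⟩ ⟨γ j, hj⟩ ≤ ((3 * G.dist (β i) (γ j) : ℕ) : ℕ∞) := by
      intro i j hi' hj' hi hj
      have hcv : γ c ∈ Y.verts := (hAγ c (by omega)).fst_mem
      have hcv' : β 0 ∈ Y.verts := (hAβ 0 (by omega)).fst_mem
      have e1 := hsame β m hβ hAβ i 0 hi' (by omega) hi hcv'
      have e2 := hsame γ D hγ hAγ c j (by omega) hj' hcv hj
      have e3 : (⟨β 0, hcv'⟩ : Y.verts) = ⟨γ c, hcv⟩ := Subtype.ext h0
      rw [e3] at e1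
      refine (SimpleGraph.edist_triangle (v := ⟨γ c, hcv⟩)).trans ((add_le_add e1 e2).trans ?_)
      norm_cast
      have t1 : G.dist (β i) (β 0) = i := by
        rw [SimpleGraph.dist_comm, hβ 0 i (by omega) hi']; omega
      have t2 := hclose i j hi' hj'
      have t3 := hG.dist_triangle (u := γ c) (v := β i) (w := γ j)
      rw [SimpleGraph.dist_comm (u := γ c) (v := β i), ← h0, t1, h0] at t3
      omega
    rintro ⟨u, hu⟩ ⟨v, hv'⟩
    simp only [hed]
    have trip : ∀ a : ℕ, ((a : ℕ) : ℕ∞) ≤ ((3 : ℕ) : ℕ∞) * (a : ℕ∞) := by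
      intro a; norm_cast; omega
    rcases hv u hu with ⟨i, hi, rfl⟩ | ⟨i, hi, rfl⟩ <;>
    rcases hv v hv' with ⟨j, hj, rfl⟩ | ⟨j, hj, rfl⟩
    · exact (hsame β m hβ hAβ i j hi hj hu hv').trans (trip _)
    · exact_mod_cast (hmix i j hi hj hu hv')
    · rw [SimpleGraph.edist_comm, SimpleGraph.dist_comm]
      exact_mod_cast (hmix j i hj hi hv' hu)
    · exact (hsame γ D hγ hAγ i j hi hj hu hv').trans (trip _)
  · intro u v l a w hw
    rw [q3] at hw
    have := hu0 u v l a
    subst this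
    by_contra hcon
    push Not at hcon
    have h := hS v w (f w) (Ne.symm l.ne) hcon.1 (Ne.symm hcon.2) hw (hSf w)
    exact hcon.1 (hf h)
  · intro u v l a u' v' l' a' hne x hx hx'
    rw [q3] at hx hx'
    have e1 := hu0 u v l a
    have e2 := hu0 u' v' l' a'
    subst e1
    subst e2
    have h := hS v v' x (Ne.symm l.ne) (Ne.symm l'.ne) (by tauto) hx hx'
    exact ⟨Or.inl h, Or.inl h⟩

lemma odd_cycle {G : SimpleGraph V} (hG : G.Connected) (ω : V → V → ZMod 2)
    (hω : ∀ a b, ω a b = ω b a) (hex : ∃ (u : V) (W : G.Walk u u), par ω W = 1) :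
    ∃ (n : ℕ) (γ : ℕ → V), γ 0 = γ n ∧ (∀ t, t < n → G.Adj (γ t) (γ (t+1))) ∧
      ∑ t ∈ Finset.range n, ω (γ t) (γ (t+1)) = 1 ∧
      (∀ i j, i ≤ j → j ≤ n → j - i ≤ G.dist (γ i) (γ j) ∨ n - (j - i) ≤ G.dist (γ i) (γ j)) := by
  classical
  have hex' : ∃ n, ∃ (u : V) (W : G.Walk u u), W.length = n ∧ par ω W = 1 := by
    obtain ⟨u, W, h⟩ := hex
    exact ⟨_, u, W, rfl, h⟩
  obtain ⟨u, W, hW, hpar⟩ := Nat.find_spec hex'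
  have hmin : ∀ (x y : V) (_ : x = y) (W' : G.Walk x y), W'.length < W.length → par ω W' = 0 := by
    intro x y hxy W' hl
    subst hxy
    have h1 := Nat.find_min hex' (hW ▸ hl)
    have h2 : par ω W' ≠ 1 := fun h => h1 ⟨x, W', rfl, h⟩
    have : ∀ a : ZMod 2, a ≠ 1 → a = 0 := by decide
    exact this _ h2
  have hadj : ∀ t, t < W.length → G.Adj (W.getVert t) (W.getVert (t+1)) := fun t ht =>
    W.adj_getVert_succ ht
  have h0 : W.getVert 0 = W.getVert W.length := by simp
  have hsum := par_getVert ω W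
  rw [hpar] at hsum
  refine ⟨W.length, W.getVert, h0, hadj, hsum.symm, ?_⟩
  intro i j hij hj
  by_contra hcon
  push Not at hcon
  obtain ⟨hc1, hc2⟩ := hcon
  set γ := W.getVert with hγ
  obtain ⟨Q, hQ⟩ := hG.exists_walk_length_eq_dist (γ i) (γ j)
  obtain ⟨a, ha⟩ : ∃ a, j = i + a := ⟨j - i, by omega⟩
  obtain ⟨b, hb⟩ : ∃ b, W.length = i + a + b := ⟨W.length - j, by omega⟩
  subst ha
  obtain ⟨w1, l1, _, _, _, p1⟩ := exists_walk_seq G γ 0 i (fun t _ _ => hadj t (by omega))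
  obtain ⟨w2, l2, _, _, _, p2⟩ := exists_walk_seq G γ i a (fun t _ _ => hadj t (by omega))
  obtain ⟨w3, l3, _, _, _, p3⟩ := exists_walk_seq G γ (i+a) b (fun t _ _ => hadj t (by omega))
  have w1' : ∃ w : G.Walk (γ 0) (γ i), w.length = i ∧ par ω w = ∑ t ∈ Finset.range i, ω (γ t) (γ (t+1)) := by
    have := p1 ω
    simp only [zero_add] at this
    clear p1
    rw [zero_add] at w1
    clear w1
    obtain ⟨w1, l1, _, _, _, p1⟩ := exists_walk_seq G (fun t => γ t) 0 i (fun t _ _ => hadj t (by omega))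
    have q := p1 ω
    simp only [zero_add] at q
    clear p1
    revert w1
    rw [zero_add]
    intro w1 l1 _ _ _ q
    exact ⟨w1, l1, q⟩
  obtain ⟨w1', l1', p1'⟩ := w1'
  have e1 := hmin _ _ rfl (w2.append Q.reverse) (by simp [l2, hQ]; omega)
  have e2 := hmin _ _ (by rw [h0, hb]) (w1'.append (Q.append w3)) (by simp [l1', l3, hQ]; omega)
  rw [par_append, par_reverse ω hω, p2] at e1
  rw [par_append, par_append, p3, p1'] at e2
  rw [hb, Finset.sum_range_add, Finset.sum_range_add] at hsum
  have e3 : ∀ q x y z : ZMod 2, x + q = 0 → y + (q + z) = 0 → 1 = y + x + z → False := by decide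
  exact e3 _ _ _ _ e1 e2 hsum

lemma exists_proj (G : SimpleGraph V) (γ : ℕ → V) (D : ℕ) : ∃ π : V → ℕ, ∀ v, π v ≤ D ∧
    (∀ j, j ≤ D → G.dist (γ (π v)) v ≤ G.dist (γ j) v) ∧
    ∀ j, j < π v → G.dist (γ (π v)) v < G.dist (γ j) v := by
  classical
  have : ∀ v, ∃ i, i ≤ D ∧ (∀ j, j ≤ D → G.dist (γ i) v ≤ G.dist (γ j) v) ∧
    ∀ j, j < i → G.dist (γ i) v < G.dist (γ j) v := by
    intro v
    have hex : ∃ i, i ≤ D ∧ (∀ j, j ≤ D → G.dist (γ i) v ≤ G.dist (γ j) v) := by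
      obtain ⟨i, hi, h⟩ := Finset.exists_min_image (Finset.range (D+1)) (fun i => G.dist (γ i) v)
        ⟨0, by simp⟩
      refine ⟨i, by simpa [Nat.lt_succ_iff] using hi, fun j hj => h j (by simp; omega)⟩
    refine ⟨Nat.find hex, (Nat.find_spec hex).1, (Nat.find_spec hex).2, ?_⟩
    intro j hj
    by_contra hcon
    refine Nat.find_min hex hj ⟨hj.le.trans (Nat.find_spec hex).1, fun j' hj' => ?_⟩
    exact (not_lt.1 hcon).trans ((Nat.find_spec hex).2 j' hj')
  choose π h using this
  exact ⟨π, h⟩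

/-- `π` is the first-nearest-point projection to the geodesic. -/
def IsProj (G : SimpleGraph V) (γ : ℕ → V) (D : ℕ) (π : V → ℕ) : Prop :=
  ∀ v, π v ≤ D ∧ (∀ j, j ≤ D → G.dist (γ (π v)) v ≤ G.dist (γ j) v) ∧
    ∀ j, j < π v → G.dist (γ (π v)) v < G.dist (γ j) v

lemma IsProj.path {G : SimpleGraph V} (hG : G.Connected) {γ : ℕ → V} {D : ℕ} {π : V → ℕ}
    (hπ : IsProj G γ D π) (v : V) : ∃ β : ℕ → V, β 0 = γ (π v) ∧ β (G.dist (γ (π v)) v) = v ∧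
      GeoSeq G β (G.dist (γ (π v)) v) ∧ ∀ i, i ≤ G.dist (γ (π v)) v →
        π (β i) = π v ∧ G.dist (γ (π v)) (β i) = i := by
  obtain ⟨β, b0, b1, hβ⟩ := exists_geo hG (γ (π v)) v
  refine ⟨β, b0, b1, hβ, ?_⟩
  intro i hi
  have e1 : G.dist (γ (π v)) (β i) = i := by
    rw [← b0, hβ 0 i (by omega) hi]; omega
  have e2 : G.dist (β i) v = G.dist (γ (π v)) v - i := by
    have := hβ i _ hi le_rfl
    rwa [b1] at this
  refine ⟨?_, e1⟩
  obtain ⟨q1, q2, q3⟩ := hπ v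
  obtain ⟨r1, r2, r3⟩ := hπ (β i)
  have t := hG.dist_triangle (u := γ (π (β i))) (v := β i) (w := v)
  have s1 := r2 (π v) q1
  rcases lt_trichotomy (π (β i)) (π v) with h | h | h
  · have := q3 _ h
    omega
  · exact h
  · have := r3 _ h
    have := q2 _ r1
    omega

lemma IsProj.self {G : SimpleGraph V} {γ : ℕ → V} {D : ℕ} {π : V → ℕ}
    (hγ : GeoSeq G γ D) (hG : G.Connected)
    (hπ : IsProj G γ D π) (j : ℕ) (hj : j ≤ D) : π (γ j) = j := by
  obtain ⟨q1, q2, q3⟩ := hπ (γ j)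
  have h := q2 j hj
  rw [SimpleGraph.dist_self] at h
  rcases le_total (π (γ j)) j with h1 | h1
  · have := hγ _ _ h1 hj; omega
  · have := hγ _ _ h1 q1
    rw [SimpleGraph.dist_comm] at this; omega

lemma geo_dist_le {G : SimpleGraph V} {γ : ℕ → V} {D : ℕ} (hγ : GeoSeq G γ D) (i j : ℕ) (hi : i ≤ D)
    (hj : j ≤ D) : j ≤ i + G.dist (γ i) (γ j) ∧ i ≤ j + G.dist (γ i) (γ j) := by
  rcases le_total i j with h | h
  · have := hγ i j h hj; omega
  · have := hγ j i h hi
    rw [SimpleGraph.dist_comm] at this; omega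

lemma decomp {G : SimpleGraph V} (hG : G.Connected) {γ : ℕ → V} {D r : ℕ} {π : V → ℕ}
    (hγ : GeoSeq G γ D) (hπ : IsProj G γ D π) (hr : ∀ v, G.dist (γ (π v)) v ≤ r) :
    ∃ (n : ℕ) (B : Fin n → Set V),
      IsGraphDecomp G (SimpleGraph.pathGraph n) B ∧
      ∀ h, radiusLE (G.induce (B h)) (2 * r + 1) := by
  refine ⟨D + 1, fun i => {v | (i : ℕ) ≤ π v ∧ π v ≤ i + (2 * r + 1)}, ⟨?_, ?_, ?_⟩, ?_⟩
  · intro v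
    exact ⟨⟨π v, by have := (hπ v).1; omega⟩, le_rfl, by simp⟩
  · intro u v huv
    have h1 := geo_dist_le hγ (π u) (π v) (hπ u).1 (hπ v).1
    have t1 := hG.dist_triangle (u := γ (π u)) (v := u) (w := γ (π v))
    have t2 := hG.dist_triangle (u := u) (v := v) (w := γ (π v))
    rw [SimpleGraph.dist_eq_one_iff_adj.2 huv, SimpleGraph.dist_comm (u := v)] at t2
    have := hr u
    have := hr v
    have := (hπ v).1
    have := (hπ u).1
    refine ⟨⟨min (π u) (π v), by omega⟩, ⟨?_, ?_⟩, ⟨?_, ?_⟩⟩ <;> simp only <;> omega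
  · intro v
    have hv := (hπ v).1
    set S : Set (Fin (D+1)) := {h | v ∈ {v | (h : ℕ) ≤ π v ∧ π v ≤ h + (2 * r + 1)}} with hS
    have hSm : ∀ h : Fin (D+1), h ∈ S ↔ (h : ℕ) ≤ π v ∧ π v ≤ h + (2 * r + 1) := fun h => Iff.rfl
    have h0 : (⟨π v, by omega⟩ : Fin (D+1)) ∈ S := by rw [hSm]; simp
    have key : ∀ d : ℕ, ∀ h : S, (h : Fin (D+1)).val + d = π v →
        ((SimpleGraph.pathGraph (D+1)).induce S).Reachable h ⟨_, h0⟩ := by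
      intro d
      induction d with
      | zero =>
        rintro ⟨h, hh⟩ he
        have : (⟨h, hh⟩ : S) = ⟨_, h0⟩ := Subtype.ext (Fin.ext (by simpa using he))
        rw [this]
      | succ d ih =>
        rintro ⟨h, hh⟩ he
        simp only at he
        rw [hSm] at hh
        have hm : (⟨h + 1, by omega⟩ : Fin (D+1)) ∈ S := by rw [hSm]; simp; omega
        refine SimpleGraph.Reachable.trans (SimpleGraph.Adj.reachable ?_) (ih ⟨_, hm⟩ (by simp; omega))
        simp [SimpleGraph.pathGraph_adj]
    have : Nonempty S := ⟨⟨_, h0⟩⟩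
    refine SimpleGraph.Connected.mk (fun a b => ?_)
    exact (key (π v - a.1.val) a (by have := (hSm a).1 a.2; omega)).trans
      (key (π v - b.1.val) b (by have := (hSm b).1 b.2; omega)).symm
  · intro h _
    set S : Set V := {v | (h : ℕ) ≤ π v ∧ π v ≤ h + (2 * r + 1)} with hS
    have hSm : ∀ v, v ∈ S ↔ (h : ℕ) ≤ π v ∧ π v ≤ h + (2 * r + 1) := fun h => Iff.rfl
    have hh := h.2
    have hP : ∀ j, (h : ℕ) ≤ j → j ≤ h + (2 * r + 1) → j ≤ D → γ j ∈ S := by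
      intro j h1 h2 h3
      rw [hSm, hπ.self hγ hG j h3]; exact ⟨h1, h2⟩
    obtain ⟨c, hc⟩ : ∃ c, c = min (h + r + 1) D := ⟨_, rfl⟩
    have hcS : γ c ∈ S := hP c (by omega) (by omega) (by omega)
    refine ⟨⟨γ c, hcS⟩, ?_⟩
    rintro ⟨v, hv⟩
    have hv' := (hSm v).1 hv
    have hvD := (hπ v).1
    obtain ⟨β, b0, b1, hβ, hb⟩ := hπ.path hG v
    have hp : γ (π v) ∈ S := hP _ hv'.1 hv'.2 hvD
    have hp' : β 0 ∈ S := b0 ▸ hp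
    have seg : ∀ i j, (h : ℕ) ≤ i → i ≤ j → j ≤ h + (2 * r + 1) → j ≤ D → ∀ hi hj,
        (G.induce S).edist ⟨γ i, hi⟩ ⟨γ j, hj⟩ ≤ ((j - i : ℕ) : ℕ∞) := by
      intro i j h1 h2 h3 h4 hi hj
      obtain ⟨l, rfl⟩ : ∃ l, j = i + l := ⟨j - i, by omega⟩
      rw [show i + l - i = l by omega]
      exact edist_seq _ γ i l (fun t _ _ => ⟨hP t (by omega) (by omega) (by omega),
        hP (t+1) (by omega) (by omega) (by omega), hγ.adj t (by omega)⟩) hi hj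
    have d1 : (G.induce S).edist ⟨γ c, hcS⟩ ⟨γ (π v), hp⟩ ≤ ((r + 1 : ℕ) : ℕ∞) := by
      rcases le_total c (π v) with h1 | h1
      · refine (seg c (π v) (by omega) h1 hv'.2 hvD hcS hp).trans ?_
        exact_mod_cast (show π v - c ≤ r + 1 by omega)
      · rw [SimpleGraph.edist_comm]
        refine (seg (π v) c (by omega) h1 (by omega) (by omega) hp hcS).trans ?_
        exact_mod_cast (show c - π v ≤ r + 1 by omega)
    have hbS : ∀ t, t ≤ G.dist (γ (π v)) v → β t ∈ S := by
      intro t ht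
      rw [hSm, (hb t ht).1]; exact hv'
    have d2 := edist_seq (G.induce S) β 0 (G.dist (γ (π v)) v) (fun t _ ht =>
      ⟨hbS t (by omega), hbS (t+1) (by omega), hβ.adj t (by omega)⟩) hp' (by rw [zero_add, b1]; exact hv)
    have e1 : (⟨β 0, hp'⟩ : S) = ⟨γ (π v), hp⟩ := Subtype.ext b0
    have e2 : ∀ hx, (⟨β (0 + G.dist (γ (π v)) v), hx⟩ : S) = ⟨v, hv⟩ := fun hx =>
      Subtype.ext (by simp only [zero_add]; exact b1)
    rw [e1, e2] at d2
    refine SimpleGraph.edist_triangle.trans ((add_le_add d1 d2).trans ?_)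
    have := hr v
    exact_mod_cast (show r + 1 + G.dist (γ (π v)) v ≤ 2 * r + 1 by omega)

lemma single_bag {G : SimpleGraph V} (hG : G.Connected) (R : ℕ)
    (hR : ∀ u v, G.dist u v ≤ R) :
    ∃ (n : ℕ) (B : Fin n → Set V),
      IsGraphDecomp G (SimpleGraph.pathGraph n) B ∧
      ∀ h, radiusLE (G.induce (B h)) R := by
  refine ⟨1, fun _ => Set.univ, ⟨fun v => ⟨0, trivial⟩, fun u v _ => ⟨0, trivial, trivial⟩, ?_⟩, ?_⟩
  · intro v
    have : Nonempty {h : Fin 1 | v ∈ (Set.univ : Set V)} := ⟨⟨0, trivial⟩⟩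
    refine SimpleGraph.Connected.mk (fun a b => ?_)
    have : a = b := Subsingleton.elim _ _
    rw [this]
  · rintro _ ⟨u⟩
    refine ⟨u, fun v => ?_⟩
    change (G.induce (Set.univ : Set V)).edist u v ≤ _
    change (Set.univ : Set V) at u v
    obtain ⟨β, b0, b1, hβ⟩ := exists_geo hG u.1 v.1
    have d2 := edist_seq (G.induce (Set.univ : Set V)) β 0 (G.dist u.1 v.1) (fun t _ ht =>
      ⟨Set.mem_univ _, Set.mem_univ _, hβ.adj t (by omega)⟩) (Set.mem_univ _) (Set.mem_univ _)
    have e1 : ∀ hx, (⟨β 0, hx⟩ : (Set.univ : Set V)) = u := fun hx => Subtype.ext b0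
    have e2 : ∀ hx, (⟨β (0 + G.dist u.1 v.1), hx⟩ : (Set.univ : Set V)) = v := fun hx =>
      Subtype.ext (by simp only [zero_add]; exact b1)
    rw [e1 (Set.mem_univ _), e2 (Set.mem_univ _)] at d2
    exact d2.trans (by exact_mod_cast hR u.1 v.1)

lemma side {G : SimpleGraph V} (hG : G.Connected) (k : ℕ) {γ : ℕ → V} {D : ℕ} {π : V → ℕ}
    (hclaw : ¬ ContainsQuasiGeodesicSubdivGE G (3 * k) clawGraph 3)
    (hγ : GeoSeq G γ D) (hπ : IsProj G γ D π) (v : V)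
    (hv : 3 * k + 1 ≤ G.dist (γ (π v)) v) (i : ℕ) (hi : i ≤ D)
    (he : G.dist (γ i) v ≤ G.dist (γ (π v)) v) : i ≤ 3 * k ∨ D ≤ i + 3 * k := by
  by_contra hcon
  push Not at hcon
  have h1 := (hπ v).2.1 i hi
  obtain ⟨β, b0, b1, hβ⟩ := exists_geo hG (γ i) v
  refine hclaw (geo_claw hG (3*k) D i _ γ β hγ hβ b0 (by omega) (by omega) (by omega) ?_)
  intro s j hs hj
  have h2 := (hπ v).2.1 j hj
  have h3 := hβ s _ hs le_rfl
  rw [b1] at h3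
  have t := hG.dist_triangle (u := γ j) (v := β s) (w := v)
  rw [SimpleGraph.dist_comm (u := γ j) (v := β s)] at t
  omega

lemma no_jump_aux {G : SimpleGraph V} (hG : G.Connected) (k : ℕ) {γ : ℕ → V} {D : ℕ} {π : V → ℕ}
    (hK3 : ¬ ContainsQuasiGeodesicSubdivGE G k triangleGraph 1)
    (hclaw : ¬ ContainsQuasiGeodesicSubdivGE G (3 * k) clawGraph 3)
    (hγ : GeoSeq G γ D) (hπ : IsProj G γ D π) (hD : 18 * k + 3 ≤ D) (u v : V) (huv : G.Adj u v)
    (hu : 3 * k + 1 ≤ G.dist (γ (π u)) u) (hv : 3 * k + 1 ≤ G.dist (γ (π v)) v)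
    (hu1 : π u ≤ 3 * k) (hv1 : ¬ π v ≤ 3 * k) : False := by
  classical
  let χ : V → ZMod 2 := fun x => if π x ≤ 3 * k then 1 else 0
  let far : V → Prop := fun x => 3 * k + 1 ≤ G.dist (γ (π x)) x
  let ω : V → V → ZMod 2 := fun x y => if far x ∧ far y then χ x + χ y else 0
  have hω : ∀ x y, ω x y = ω y x := by
    intro x y
    simp only [ω]
    by_cases h : far x ∧ far y
    · rw [if_pos h, if_pos h.symm, add_comm]
    · rw [if_neg h, if_neg (fun h' => h h'.symm)]
  have hωπ : ∀ x y, π x = π y → ω x y = 0 := by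
    intro x y h
    have e : χ x = χ y := by simp only [χ, h]
    simp only [ω, e, CharTwo.add_self_eq_zero, ite_self]
  have hleg : ∀ x, ∃ w : G.Walk (γ (π x)) x, par ω w = 0 := by
    intro x
    obtain ⟨β, b0, b1, hβ, hb⟩ := hπ.path hG x
    obtain ⟨w, _, _, _, _, hw⟩ := exists_walk_seq G β 0 (G.dist (γ (π x)) x)
      (fun t _ _ => hβ.adj t (by omega))
    have h := hw ω
    rw [Finset.sum_eq_zero] at h
    · refine ⟨w.copy b0 (by rw [zero_add, b1]), ?_⟩
      unfold par at h ⊢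
      rwa [SimpleGraph.Walk.darts_copy]
    · intro t ht
      rw [Finset.mem_range] at ht
      apply hωπ
      rw [zero_add, (hb t (by omega)).1, (hb (t+1) (by omega)).1]
  have hspine : ∃ w : G.Walk (γ (π u)) (γ (π v)), par ω w = 0 := by
    obtain ⟨l, hl⟩ : ∃ l, π v = π u + l := ⟨π v - π u, by omega⟩
    have hvD := (hπ v).1
    obtain ⟨w, _, _, _, _, hw⟩ := exists_walk_seq G γ (π u) l (fun t _ _ => hγ.adj t (by omega))
    rw [hl]
    refine ⟨w, ?_⟩
    rw [hw ω]
    apply Finset.sum_eq_zero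
    intro t ht
    rw [Finset.mem_range] at ht
    have : ¬ far (γ (π u + t)) := by
      simp only [far]
      rw [hπ.self hγ hG _ (by omega), SimpleGraph.dist_self]; omega
    simp only [ω, this, false_and, if_false]
  obtain ⟨wu, pu⟩ := hleg u
  obtain ⟨wv, pv⟩ := hleg v
  obtain ⟨ws, ps⟩ := hspine
  have hex : ∃ (u : V) (W : G.Walk u u), par ω W = 1 := by
    refine ⟨u, wu.reverse.append (ws.append (wv.append
      (SimpleGraph.Walk.cons huv.symm SimpleGraph.Walk.nil))), ?_⟩
    rw [par_append, par_append, par_append, par_reverse ω hω, pu, pv, ps]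
    simp only [par, SimpleGraph.Walk.darts_cons, SimpleGraph.Walk.darts_nil, List.map_cons,
      List.map_nil, List.sum_cons, List.sum_nil]
    have : far v ∧ far u := ⟨hv, hu⟩
    simp [ω, this, χ, hu1, hv1]
  obtain ⟨n, α, a0, hadj, hsum, hd⟩ := odd_cycle hG ω hω hex
  obtain ⟨t, ht, hne⟩ : ∃ t, t < n ∧ ω (α t) (α (t+1)) ≠ 0 := by
    by_contra hcon
    push Not at hcon
    rw [Finset.sum_eq_zero (fun t ht => hcon t (Finset.mem_range.1 ht))] at hsum
    exact absurd hsum (by decide)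
  obtain ⟨s, hs, hfar⟩ : ∃ s, s ≤ n ∧ ¬ far (α s) := by
    by_contra hcon
    push Not at hcon
    have : ∑ t ∈ Finset.range n, ω (α t) (α (t+1)) =
        ∑ t ∈ Finset.range n, (χ (α (t+1)) - χ (α t)) := by
      apply Finset.sum_congr rfl
      intro t ht
      rw [Finset.mem_range] at ht
      simp only [ω]
      rw [if_pos ⟨hcon t (by omega), hcon (t+1) (by omega)⟩, CharTwo.sub_eq_add, add_comm]
    rw [this, Finset.sum_range_sub (fun t => χ (α t)), a0, sub_self] at hsum
    exact absurd hsum (by decide)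
  have hft : far (α t) ∧ far (α (t+1)) := by
    by_contra h
    simp only [ω, h, if_false, ne_eq, not_true] at hne
  have hχ : (π (α t) ≤ 3 * k) ≠ (π (α (t+1)) ≤ 3 * k) := by
    intro h
    apply hne
    have e : χ (α t) = χ (α (t+1)) := by simp only [χ, h]
    simp only [ω, e, CharTwo.add_self_eq_zero, ite_self]
  have hm : 6 * k + 1 ≤ G.dist (γ (π (α t))) (α t) := by
    have s1 := side hG k hclaw hγ hπ _ hft.1 _ (hπ _).1 le_rfl
    have s2 := side hG k hclaw hγ hπ _ hft.2 _ (hπ _).1 le_rfl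
    have g := geo_dist_le hγ (π (α t)) (π (α (t+1))) (hπ _).1 (hπ _).1
    have t1 := hG.dist_triangle (u := γ (π (α t))) (v := α t) (w := γ (π (α (t+1))))
    have t2 := hG.dist_triangle (u := α t) (v := α (t+1)) (w := γ (π (α (t+1))))
    have e1 := SimpleGraph.dist_eq_one_iff_adj.2 (hadj t ht)
    rw [e1, SimpleGraph.dist_comm (u := α (t+1))] at t2
    have t3 := (hπ (α (t+1))).2.1 (π (α t)) (hπ _).1
    have t4 := hG.dist_triangle (u := γ (π (α t))) (v := α t) (w := α (t+1))
    rw [e1] at t4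
    have hx : ¬ ((π (α t) ≤ 3 * k) ↔ (π (α (t+1)) ≤ 3 * k)) := fun h => hχ (propext h)
    by_cases c1 : π (α t) ≤ 3 * k <;> by_cases c2 : π (α (t+1)) ≤ 3 * k <;>
      simp only [c1, c2, not_true, iff_true, iff_false, not_false_eq_true] at hx <;> omega
  have hdist : 3 * k + 1 ≤ G.dist (α s) (α t) := by
    have t1 := hG.dist_triangle (u := γ (π (α s))) (v := α s) (w := α t)
    have t2 := (hπ (α t)).2.1 (π (α s)) (hπ _).1
    simp only [far] at hfar
    omega
  have hup : ∀ i j, i ≤ j → j ≤ n → 2 * G.dist (α i) (α j) ≤ n := by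
    intro i j hij hj
    have d1 := dist_seq hG α i (j - i) (fun t _ _ => hadj t (by omega))
    have d2 := dist_seq hG α 0 i (fun t _ _ => hadj t (by omega))
    have d3 := dist_seq hG α j (n - j) (fun t _ _ => hadj t (by omega))
    rw [show i + (j - i) = j by omega] at d1
    rw [show j + (n - j) = n by omega, ← a0] at d3
    rw [zero_add] at d2
    have t1 := hG.dist_triangle (u := α i) (v := α 0) (w := α j)
    rw [SimpleGraph.dist_comm (u := α i) (v := α 0), SimpleGraph.dist_comm (u := α 0) (v := α j)] at t1
    omega
  have hn : 2 * G.dist (α s) (α t) ≤ n := by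
    rcases le_total s t with h | h
    · exact hup s t h ht.le
    · rw [SimpleGraph.dist_comm]; exact hup t s h hs
  have hn2 : n ≠ 2 := by
    rintro rfl
    rw [Finset.sum_range_succ, Finset.sum_range_one, ← a0, hω (α 1) (α 0),
      CharTwo.add_self_eq_zero] at hsum
    exact absurd hsum (by decide)
  exact hK3 (geo_cycle hG k n α (by omega) a0 hadj hd)

lemma all_close {G : SimpleGraph V} (hG : G.Connected) (k : ℕ) {γ : ℕ → V} {D : ℕ} {π : V → ℕ}
    (hK3 : ¬ ContainsQuasiGeodesicSubdivGE G k triangleGraph 1)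
    (hclaw : ¬ ContainsQuasiGeodesicSubdivGE G (3 * k) clawGraph 3)
    (hγ : GeoSeq G γ D) (hπ : IsProj G γ D π) (hD : 18 * k + 3 ≤ D)
    (hdiam : ∀ u v, G.dist u v ≤ D) (v : V) : G.dist (γ (π v)) v ≤ 9 * k := by
  classical
  by_contra hcon
  push Not at hcon
  have nj : ∀ x y, G.Adj x y → 3 * k + 1 ≤ G.dist (γ (π x)) x → 3 * k + 1 ≤ G.dist (γ (π y)) y →
      (π x ≤ 3 * k ↔ π y ≤ 3 * k) := by
    intro x y hxy hx hy
    by_cases c1 : π x ≤ 3 * k <;> by_cases c2 : π y ≤ 3 * k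
    · simp [c1, c2]
    · exact (no_jump_aux hG k hK3 hclaw hγ hπ hD x y hxy hx hy c1 c2).elim
    · exact (no_jump_aux hG k hK3 hclaw hγ hπ hD y x hxy.symm hy hx c2 c1).elim
    · simp [c1, c2]
  obtain ⟨e, he⟩ : ∃ e, e = if π v ≤ 3 * k then D else 0 := ⟨_, rfl⟩
  have heD : e ≤ D := by rw [he]; split_ifs <;> omega
  obtain ⟨ρ, r0, r1, hρ⟩ := exists_geo hG v (γ e)
  have hex : ∃ s, G.dist (γ (π (ρ s))) (ρ s) < 3 * k + 1 := by
    refine ⟨G.dist v (γ e), ?_⟩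
    rw [r1, hπ.self hγ hG e heD, SimpleGraph.dist_self]; omega
  have hs1 := Nat.find_spec hex
  have hs2 := fun m hm => Nat.find_min hex (m := m) hm
  have hs3 : Nat.find hex ≤ G.dist v (γ e) := Nat.find_min' hex (by
    rw [r1, hπ.self hγ hG e heD, SimpleGraph.dist_self]; omega)
  have hs0 : Nat.find hex ≠ 0 := by
    intro h
    rw [h, r0] at hs1
    omega
  obtain ⟨s, hs⟩ := Nat.exists_eq_succ_of_ne_zero hs0
  rw [hs] at hs1 hs2 hs3
  simp only [Nat.succ_eq_add_one] at hs1 hs2 hs3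
  have hfar : ∀ t, t ≤ s → 3 * k + 1 ≤ G.dist (γ (π (ρ t))) (ρ t) := fun t ht =>
    not_lt.1 (hs2 t (by omega))
  have hcol : ∀ t, t ≤ s → (π (ρ t) ≤ 3 * k ↔ π v ≤ 3 * k) := by
    intro t
    induction t with
    | zero => intro _; rw [r0]
    | succ t ih =>
      intro ht
      rw [← ih (by omega)]
      exact (nj _ _ (hρ.adj t (by omega)) (hfar t (by omega)) (hfar (t+1) ht)).symm
  have hadj := hρ.adj s (by omega)
  have e1 := SimpleGraph.dist_eq_one_iff_adj.2 hadj
  obtain ⟨x, hx⟩ : ∃ x, x = ρ s := ⟨_, rfl⟩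
  obtain ⟨y, hy⟩ : ∃ y, y = ρ (s+1) := ⟨_, rfl⟩
  have hfx := hfar s le_rfl
  have hcx := hcol s le_rfl
  have hvy : G.dist v y = s + 1 := by
    have := hρ 0 (s+1) (by omega) hs3
    rw [r0, ← hy] at this; omega
  have hye : G.dist y (γ e) = G.dist v (γ e) - (s + 1) := by
    have := hρ (s+1) _ hs3 le_rfl
    rwa [r1, ← hy] at this
  rw [← hx] at hfx hcx
  rw [← hx, ← hy] at e1
  rw [← hy] at hs1
  have t1 := hG.dist_triangle (u := γ (π y)) (v := y) (w := x)
  rw [SimpleGraph.dist_comm (u := y) (v := x), e1] at t1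
  have sx := side hG k hclaw hγ hπ x hfx _ (hπ x).1 le_rfl
  have sy := side hG k hclaw hγ hπ x hfx _ (hπ y).1 (by omega)
  have g1 := geo_dist_le hγ (π x) (π y) (hπ x).1 (hπ y).1
  have t2 := hG.dist_triangle (u := γ (π x)) (v := x) (w := γ (π y))
  rw [SimpleGraph.dist_comm (u := x)] at t2
  have t3 := (hπ x).2.1 (π y) (hπ y).1
  have g2 := geo_dist_le hγ (π y) e (hπ y).1 heD
  have t4 := hG.dist_triangle (u := γ (π y)) (v := y) (w := γ e)
  have t5 := hG.dist_triangle (u := γ (π y)) (v := y) (w := v)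
  have t6 := (hπ v).2.1 (π y) (hπ y).1
  rw [SimpleGraph.dist_comm (u := y) (v := v)] at t5
  have t7 := hdiam v (γ e)
  by_cases c : π v ≤ 3 * k
  · rw [if_pos c] at he
    have := hcx.2 c
    omega
  · rw [if_neg c] at he
    have : ¬ π x ≤ 3 * k := fun h => c (hcx.1 h)
    omega

/-- Let `k : ℕ`. If a connected graph `G` contains no `(≥ k)`-subdivision
of the triangle `K³` as a geodesic subgraph and no `(≥ 3k)`-subdivision of the claw
`K_{1,3}` as a `3`-quasi-geodesic subgraph, then there is a path `P` and a
`P`-decomposition of `G` of radial width at most `18k + 2`. -/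
theorem exists_path_decomposition_of_connected
    {V : Type*} [Fintype V] (k : ℕ) (G : SimpleGraph V) (hG : G.Connected)
    (hK3 : ¬ ContainsQuasiGeodesicSubdivGE G k triangleGraph 1)
    (hclaw : ¬ ContainsQuasiGeodesicSubdivGE G (3 * k) clawGraph 3) :
    ∃ (n : ℕ) (B : Fin n → Set V),
      IsGraphDecomp G (SimpleGraph.pathGraph n) B ∧
      ∀ h, radiusLE (G.induce (B h)) (18 * k + 2) := by
  classical
  have : Nonempty V := hG.nonempty
  obtain ⟨⟨a, b⟩, hab⟩ := Finite.exists_max (fun p : V × V => G.dist p.1 p.2)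
  have hdiam : ∀ u v, G.dist u v ≤ G.dist a b := fun u v => hab (u, v)
  rcases Nat.lt_or_ge (G.dist a b) (18 * k + 3) with hD | hD
  · exact single_bag hG _ (fun u v => (hdiam u v).trans (by omega))
  · obtain ⟨γ, g0, g1, hγ⟩ := exists_geo hG a b
    obtain ⟨π, hπ⟩ := exists_proj G γ (G.dist a b)
    have hr := all_close hG k hK3 hclaw hγ hπ hD hdiam
    obtain ⟨n, B, h1, h2⟩ := decomp hG hγ hπ hr
    refine ⟨n, B, h1, fun h hne => ?_⟩
    obtain ⟨z, hz⟩ := h2 h hne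
    refine ⟨z, fun w => (hz w).trans ?_⟩
    exact_mod_cast (show 2 * (9 * k) + 1 ≤ 18 * k + 2 by omega)

end RadialPaper
end

section
/- Let k ∈ ℕ. If a graph G contains no (≥4k+1)-subdivision of the triangle K³ as a geodesic subgraph and no (≥3k)-subdivision of the claw K_{1,3} as a 3-quasi-geodesic subgraph, then G has radial path-width at most 18k + 2. -/
open SimpleGraph

namespace RadialPaper

variable {V W N : Type*}

def NoCyc {V : Type*} (G : SimpleGraph V) (k : ℕ) : Prop :=
  ∀ (c : ℕ → V) (L : ℕ), 12 * k + 6 ≤ L → c L = c 0 → (∀ t < L, G.Adj (c t) (c (t + 1))) →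
    ¬ (∀ i j, i ≤ j → j ≤ L → min (j - i) (L - (j - i)) ≤ G.dist (c i) (c j))

def NoClaw {V : Type*} (G : SimpleGraph V) (k : ℕ) : Prop :=
  ∀ leg : Fin 3 → ℕ → V, (∀ a b, leg a 0 = leg b 0) →
    (∀ a, ∀ t < 3 * k + 1, G.Adj (leg a t) (leg a (t + 1))) →
    (∀ a s t, s ≤ t → t ≤ 3 * k + 1 → t - s ≤ 3 * G.dist (leg a s) (leg a t)) →
    ¬ (∀ a b s t, a ≠ b → s ≤ 3 * k + 1 → t ≤ 3 * k + 1 →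
      s + t ≤ 3 * G.dist (leg a s) (leg b t))

lemma walk_of_fun {V : Type*} {G : SimpleGraph V} (c : ℕ → V) (a n : ℕ)
    (h : ∀ t, a ≤ t → t < a + n → G.Adj (c t) (c (t + 1))) :
    ∃ w : G.Walk (c a) (c (a + n)), w.length = n ∧
      (∀ x, x ∈ w.support ↔ ∃ t, a ≤ t ∧ t ≤ a + n ∧ c t = x) ∧
      (∀ e, e ∈ w.edges ↔ ∃ t, a ≤ t ∧ t < a + n ∧ e = s(c t, c (t + 1))) ∧
      (Set.InjOn c (Set.Icc a (a + n)) → w.IsPath) := by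
  induction n with
  | zero =>
    refine ⟨Walk.nil, rfl, ?_, ?_, ?_⟩
    · intro x
      simp only [Walk.support_nil, List.mem_singleton]
      constructor
      · rintro rfl; exact ⟨a, le_rfl, le_rfl, rfl⟩
      · rintro ⟨t, h1, h2, rfl⟩
        rw [show t = a by omega]
    · intro e
      simp only [Walk.edges_nil, List.not_mem_nil, false_iff]
      rintro ⟨t, h1, h2, _⟩; omega
    · intro _; exact Walk.IsPath.nil
  | succ n ih =>
    obtain ⟨w, hl, hs, he, hp⟩ := ih (fun t h1 h2 => h t h1 (by omega))
    refine ⟨w.concat (h (a + n) (by omega) (by omega)), by simp [hl], ?_, ?_, ?_⟩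
    · intro x
      rw [Walk.support_concat]
      simp only [List.mem_append, hs, List.mem_singleton]
      constructor
      · rintro (⟨t, h1, h2, rfl⟩ | rfl)
        · exact ⟨t, h1, by omega, rfl⟩
        · exact ⟨a + n + 1, by omega, by omega, rfl⟩
      · rintro ⟨t, h1, h2, rfl⟩
        by_cases ht : t = a + n + 1
        · right; rw [ht]; rfl
        · left; exact ⟨t, h1, by omega, rfl⟩
    · intro e
      rw [Walk.edges_concat]
      simp only [List.mem_append, List.concat_eq_append, he, List.mem_singleton]
      constructor
      · rintro (⟨t, h1, h2, rfl⟩ | rfl)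
        · exact ⟨t, h1, by omega, rfl⟩
        · exact ⟨a + n, by omega, by omega, rfl⟩
      · rintro ⟨t, h1, h2, rfl⟩
        by_cases ht : t = a + n
        · right; rw [ht]; rfl
        · left; exact ⟨t, h1, by omega, rfl⟩
    · intro hinj
      have hp' := hp (hinj.mono (Set.Icc_subset_Icc le_rfl (by omega)))
      rw [Walk.isPath_def, Walk.support_concat]
      rw [List.nodup_append]
      refine ⟨hp'.support_nodup, by simp, ?_⟩
      intro x hx y hy
      rw [hs] at hx
      obtain ⟨t, h1, h2, rfl⟩ := hx
      simp only [List.mem_singleton] at hy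
      subst hy
      intro heq
      have := hinj (x₁ := t) (x₂ := a + n + 1) ⟨h1, by omega⟩ ⟨by omega, by omega⟩ heq
      omega

lemma dist_getVert_le {V : Type*} {G : SimpleGraph V} {u v : V} (w : G.Walk u v) {s t : ℕ}
    (hst : s ≤ t) : G.dist (w.getVert s) (w.getVert t) ≤ t - s := by
  have h1 := G.dist_le ((w.drop s).take (t - s))
  rw [Walk.take_length] at h1
  rw [Walk.drop_getVert, Nat.add_sub_cancel' hst] at h1
  exact h1.trans (min_le_left _ _)

lemma geo {V : Type*} {G : SimpleGraph V} (hc : G.Connected) (u v : V) :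
    ∃ q : ℕ → V, q 0 = u ∧ q (G.dist u v) = v ∧
      (∀ s t, s ≤ t → t ≤ G.dist u v → G.dist (q s) (q t) = t - s) := by
  obtain ⟨w, hw⟩ := hc.exists_walk_length_eq_dist u v
  refine ⟨w.getVert, by simp, by rw [← hw]; simp, ?_⟩
  intro s t hst ht
  have h1 := dist_getVert_le w hst
  have h2 := dist_getVert_le w (Nat.zero_le s)
  have h3 := dist_getVert_le w (hw ▸ ht)
  simp only [Walk.getVert_zero, Walk.getVert_length] at h2 h3
  have h4 := hc.dist_triangle (u := u) (v := w.getVert s) (w := v)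
  have h5 := hc.dist_triangle (u := w.getVert s) (v := w.getVert t) (w := v)
  omega

def wsum {V : Type*} {G : SimpleGraph V} (wt : V → V → ℤ) {u v : V} (w : G.Walk u v) : ℤ :=
  (w.darts.map (fun d => wt d.fst d.snd)).sum

lemma wsum_append {V : Type*} {G : SimpleGraph V} (wt : V → V → ℤ) {u v x : V}
    (w : G.Walk u v) (w' : G.Walk v x) : wsum wt (w.append w') = wsum wt w + wsum wt w' := by
  simp [wsum]

lemma wsum_cons {V : Type*} {G : SimpleGraph V} (wt : V → V → ℤ) {u v x : V}
    (h : G.Adj u v) (w' : G.Walk v x) : wsum wt (Walk.cons h w') = wt u v + wsum wt w' := by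
  simp [wsum]

lemma wsum_reverse {V : Type*} {G : SimpleGraph V} (wt : V → V → ℤ)
    (hwt : ∀ u v, wt u v = - wt v u) {u v : V}
    (w : G.Walk u v) : wsum wt w.reverse = - wsum wt w := by
  induction w with
  | nil => simp [wsum]
  | cons h p ih =>
    rw [Walk.reverse_cons, wsum_append, ih, wsum_cons, wsum_cons, hwt]
    simp [wsum]

lemma wsum_pot {V : Type*} {G : SimpleGraph V} (wt : V → V → ℤ) (φ : V → ℤ) {u v : V}
    (w : G.Walk u v) (h : ∀ d ∈ w.darts, wt d.fst d.snd = φ d.snd - φ d.fst) :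
    wsum wt w = φ v - φ u := by
  induction w with
  | nil => simp [wsum]
  | cons hh p ih =>
    rw [wsum_cons, ih (fun d hd => h d (by simp [hd]))]
    have := h ⟨(_, _), hh⟩ (by simp)
    simp only at this
    rw [this]; ring

/-- minimal closed walk of nonzero weight is geodesic -/
lemma min_closed {V : Type*} {G : SimpleGraph V} (hc : G.Connected) (wt : V → V → ℤ)
    (hwt : ∀ u v, wt u v = - wt v u) (u : V) (w : G.Walk u u) (hw : wsum wt w ≠ 0) :
    ∃ (u : V) (w : G.Walk u u), wsum wt w ≠ 0 ∧ ∀ i j, i ≤ j → j ≤ w.length →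
      min (j - i) (w.length - (j - i)) ≤ G.dist (w.getVert i) (w.getVert j) := by
  classical
  have hex : ∃ L, ∃ (u : V) (w : G.Walk u u), wsum wt w ≠ 0 ∧ w.length = L := ⟨_, u, w, hw, rfl⟩
  obtain ⟨u, w, hw, hL⟩ := Nat.find_spec hex
  have hmin : ∀ (u' : V) (w' : G.Walk u' u'), w'.length < w.length → wsum wt w' = 0 := by
    intro u' w' hlt
    by_contra hne
    exact Nat.find_min hex (hL ▸ hlt) ⟨u', w', hne, rfl⟩
  refine ⟨u, w, hw, ?_⟩
  intro i j hij hj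
  by_contra hlt
  push Not at hlt
  obtain ⟨g, hg⟩ := hc.exists_walk_length_eq_dist (w.getVert i) (w.getVert j)
  have key : ∀ (x y : V) (a : G.Walk u x) (b : G.Walk x y) (e : G.Walk y u) (g : G.Walk x y),
      w = a.append (b.append e) → g.length < b.length → g.length < a.length + e.length →
        False := by
    intro x y a b e g hdec h1 h2
    have e1 := hmin u (a.append (g.append e)) (by rw [hdec]; simp; omega)
    have e2 := hmin x (b.append g.reverse) (by rw [hdec]; simp; omega)
    rw [hdec] at hw
    simp only [wsum_append, wsum_reverse wt hwt] at *
    apply hw; linarith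
  have hdj : (w.drop i).getVert (j - i) = w.getVert j := by
    rw [Walk.drop_getVert, Nat.add_sub_cancel' hij]
  refine key _ _ (w.take i) ((w.drop i).take (j - i)) ((w.drop i).drop (j - i))
    (g.copy rfl hdj.symm) ?_ ?_ ?_
  · rw [Walk.append_take_drop_eq, Walk.append_take_drop_eq]
  · simp [Walk.take_length, Walk.drop_length]; omega
  · simp [Walk.take_length, Walk.drop_length]; omega

structure Setup {V : Type*} (G : SimpleGraph V) (k n : ℕ) (p : ℕ → V) (f : V → ℕ) : Prop where
  conn : G.Connected
  geo : ∀ s t, s ≤ t → t ≤ n → G.dist (p s) (p t) = t - s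
  diam : ∀ u v, G.dist u v ≤ n
  hn : 18 * k + 3 ≤ n
  fle : ∀ v, f v ≤ n
  near : ∀ v i, i ≤ n → G.dist v (p (f v)) ≤ G.dist v (p i)
  cons : ∀ v, ∃ w : G.Walk v (p (f v)), w.length = G.dist v (p (f v)) ∧ ∀ x ∈ w.support, f x = f v

lemma Setup.rev {V : Type*} {G : SimpleGraph V} {k n : ℕ} {p : ℕ → V} {f : V → ℕ}
    (S : Setup G k n p f) : Setup G k n (fun t => p (n - t)) (fun v => n - f v) where
  conn := S.conn
  geo := by
    intro s t hst ht
    rw [dist_comm, S.geo _ _ (by omega) (by omega)]; omega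
  diam := S.diam
  hn := S.hn
  fle := by intro v; omega
  near := by
    intro v i hi
    have := S.near v (n - i) (by omega)
    have h2 : n - (n - f v) = f v := by have := S.fle v; omega
    simp only [h2]; exact this
  cons := by
    intro v
    have h2 : n - (n - f v) = f v := by have := S.fle v; omega
    obtain ⟨w, h1, h3⟩ := S.cons v
    refine ⟨w.copy rfl (by rw [h2]), by simp [h1, h2], ?_⟩
    intro x hx
    simp only [Walk.support_copy] at hx
    rw [h3 x hx]

lemma Setup.claw {V : Type*} {G : SimpleGraph V} {k n : ℕ} {p : ℕ → V} {f : V → ℕ}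
    (S : Setup G k n p f) (hN : NoClaw G k) (v : V) (i : ℕ) (hi : i ≤ n)
    (hd : 3 * k + 1 ≤ G.dist v (p i)) (hnear : ∀ j ≤ n, G.dist v (p i) ≤ G.dist v (p j)) :
    i ≤ 3 * k ∨ n ≤ i + 3 * k := by
  by_contra hcon
  push Not at hcon
  obtain ⟨h1, h2⟩ := hcon
  obtain ⟨q, q0, q1, qg⟩ := RadialPaper.geo S.conn (p i) v
  rw [dist_comm] at hd
  have hpp : ∀ s t, s ≤ t → t ≤ n → G.dist (p t) (p s) = t - s := by
    intro s t hst ht; rw [dist_comm, S.geo s t hst ht]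
  have cross : ∀ t j, t ≤ 3 * k + 1 → j ≤ n →
      t ≤ G.dist (q t) (p j) ∧ G.dist (p i) (p j) ≤ t + G.dist (q t) (p j) := by
    intro t j ht hj
    have e1 := qg t _ (by omega) le_rfl
    have e2 := qg 0 t (by omega) (by omega)
    rw [q1] at e1
    rw [q0] at e2
    have e3 := S.conn.dist_triangle (u := v) (v := q t) (w := p j)
    have e4 := S.conn.dist_triangle (u := p i) (v := q t) (w := p j)
    have e5 := hnear j hj
    rw [dist_comm (u := v) (v := q t)] at e3
    rw [dist_comm (u := v) (v := p i)] at e5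
    omega
  refine hN ![fun t => p (i - t), fun t => p (i + t), q] ?_ ?_ ?_ ?_
  · intro a b
    fin_cases a <;> fin_cases b <;> simp [q0]
  · intro a t ht
    rw [← dist_eq_one_iff_adj]
    fin_cases a
    · simp only [Fin.zero_eta, Matrix.cons_val_zero]
      rw [hpp _ _ (by omega) (by omega)]; omega
    · simp only [Fin.mk_one, Matrix.cons_val_one, Matrix.cons_val_zero]
      rw [S.geo _ _ (by omega) (by omega)]; omega
    · show G.dist (q t) (q (t + 1)) = 1
      rw [qg _ _ (by omega) (by omega)]; omega
  · intro a s t hst ht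
    fin_cases a
    · show t - s ≤ 3 * G.dist (p (i - s)) (p (i - t))
      rw [hpp _ _ (by omega) (by omega)]; omega
    · show t - s ≤ 3 * G.dist (p (i + s)) (p (i + t))
      rw [S.geo _ _ (by omega) (by omega)]; omega
    · show t - s ≤ 3 * G.dist (q s) (q t)
      rw [qg _ _ (by omega) (by omega)]; omega
  · intro a b s t hab hs ht
    fin_cases a <;> fin_cases b
    · exact absurd rfl hab
    · show s + t ≤ 3 * G.dist (p (i - s)) (p (i + t))
      rw [S.geo _ _ (by omega) (by omega)]; omega
    · show s + t ≤ 3 * G.dist (p (i - s)) (q t)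
      have := cross t (i - s) ht (by omega)
      rw [hpp _ _ (by omega) (by omega)] at this
      rw [dist_comm]
      omega
    · show s + t ≤ 3 * G.dist (p (i + s)) (p (i - t))
      rw [hpp _ _ (by omega) (by omega)]; omega
    · exact absurd rfl hab
    · show s + t ≤ 3 * G.dist (p (i + s)) (q t)
      have := cross t (i + s) ht (by omega)
      rw [S.geo _ _ (by omega) (by omega)] at this
      rw [dist_comm]
      omega
    · show s + t ≤ 3 * G.dist (q s) (p (i - t))
      have := cross s (i - t) hs (by omega)
      rw [hpp _ _ (by omega) (by omega)] at this
      omega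
    · show s + t ≤ 3 * G.dist (q s) (p (i + t))
      have := cross s (i + t) hs (by omega)
      rw [S.geo _ _ (by omega) (by omega)] at this
      omega
    · exact absurd rfl hab

lemma Setup.sep {V : Type*} {G : SimpleGraph V} {k n : ℕ} {p : ℕ → V} {f : V → ℕ}
    (S : Setup G k n p f) (u v : V) :
    f v ≤ f u + (G.dist u (p (f u)) + G.dist u v + G.dist v (p (f v))) ∧
    f u ≤ f v + (G.dist u (p (f u)) + G.dist u v + G.dist v (p (f v))) := by
  have e1 := S.conn.dist_triangle (u := p (f u)) (v := u) (w := p (f v))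
  have e2 := S.conn.dist_triangle (u := u) (v := v) (w := p (f v))
  have e3 : G.dist (p (f u)) u = G.dist u (p (f u)) := dist_comm
  have hu := S.fle u
  have hv := S.fle v
  rcases le_total (f u) (f v) with h | h
  · have := S.geo _ _ h hv; omega
  · have := S.geo _ _ h hu
    rw [dist_comm] at this; omega

lemma Setup.lip {V : Type*} {G : SimpleGraph V} {k n : ℕ} {p : ℕ → V} {f : V → ℕ}
    (S : Setup G k n p f) (u v : V) :
    G.dist u (p (f u)) ≤ G.dist u v + G.dist v (p (f v)) := by
  have e2 := S.conn.dist_triangle (u := u) (v := v) (w := p (f v))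
  have := S.near u (f v) (S.fle v)
  omega

/-- an edge from a far vertex to a close vertex does not jump -/
lemma Setup.edge {V : Type*} {G : SimpleGraph V} {k n : ℕ} {p : ℕ → V} {f : V → ℕ}
    (S : Setup G k n p f) (hN : NoClaw G k) (u v : V) (h : G.Adj u v)
    (hu : 3 * k + 1 ≤ G.dist u (p (f u))) (hv : G.dist v (p (f v)) ≤ 3 * k) :
    (f u ≤ 3 * k ∧ f v ≤ 3 * k) ∨ (n ≤ f u + 3 * k ∧ n ≤ f v + 3 * k) := by
  have hadj : G.dist u v = 1 := dist_eq_one_iff_adj.2 h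
  have h1 := S.lip u v
  have e2 := S.conn.dist_triangle (u := u) (v := v) (w := p (f v))
  have hnr := S.near u (f v) (S.fle v)
  have c1 := S.claw hN u (f u) (S.fle u) hu (S.near u)
  have c2 := S.claw hN u (f v) (S.fle v) (by omega) (by
    intro j hj
    have := S.near u j hj
    omega)
  have := S.sep u v
  have := S.hn
  omega

lemma Setup.no_far_edge {V : Type*} {G : SimpleGraph V} {k n : ℕ} {p : ℕ → V} {f : V → ℕ}
    (S : Setup G k n p f) (hN : NoClaw G k) (hC : NoCyc G k) (x y : V) (h : G.Adj x y)
    (hx : 3 * k + 1 ≤ G.dist x (p (f x))) (hy : 3 * k + 1 ≤ G.dist y (p (f y)))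
    (hfx : f x ≤ 3 * k) (hfy : n ≤ f y + 3 * k) : False := by
  classical
  have hn := S.hn
  set D : V → ℕ := fun v => G.dist v (p (f v)) with hD
  set A0 : V → Prop := fun v => 3 * k + 1 ≤ D v ∧ f v ≤ 3 * k with hA0
  set A1 : V → Prop := fun v => 3 * k + 1 ≤ D v ∧ n ≤ f v + 3 * k with hA1
  set wt : V → V → ℤ := fun u v =>
    (if A0 u ∧ A1 v then 1 else 0) - (if A1 u ∧ A0 v then 1 else 0) with hwtdef
  have hwt : ∀ u v, wt u v = - wt v u := by
    intro u v
    simp only [hwtdef, and_comm]; ring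
  have hwt0 : ∀ u v, wt u v ≠ 0 → (A0 u ∧ A1 v) ∨ (A1 u ∧ A0 v) := by
    intro u v huv
    by_contra hcon
    push Not at hcon
    apply huv
    simp only [hwtdef]
    rw [if_neg (by tauto), if_neg (by tauto)]; rfl
  have hwtxy : wt x y = 1 := by
    simp only [hwtdef]
    rw [if_pos ⟨⟨hx, hfx⟩, ⟨hy, hfy⟩⟩, if_neg (by rintro ⟨⟨-, h1⟩, -⟩; omega)]; rfl
  -- walks along which `f` is constant
  have hconst : ∀ v (w : G.Walk v (p (f v))), (∀ z ∈ w.support, f z = f v) → wsum wt w = 0 := by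
    intro v w hw
    rw [wsum_pot wt (fun _ => 0) w]; · simp
    intro d hd
    by_contra hne
    have h1 := hw _ (w.dart_fst_mem_support_of_mem_darts hd)
    have h2 := hw _ (w.dart_snd_mem_support_of_mem_darts hd)
    rcases hwt0 d.fst d.snd (by simpa using hne) with ⟨⟨_, h3⟩, ⟨_, h4⟩⟩ | ⟨⟨_, h3⟩, ⟨_, h4⟩⟩ <;>
      omega
  obtain ⟨wx, -, hwx⟩ := S.cons x
  obtain ⟨wy, -, hwy⟩ := S.cons y
  obtain ⟨wp, -, hwp, -, -⟩ := walk_of_fun (G := G) p (f x) (f y - f x) (by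
    intro t h1 h2
    rw [← dist_eq_one_iff_adj, S.geo _ _ (by omega) (by have := S.fle y; omega)]; omega)
  have hxy : f x + (f y - f x) = f y := by omega
  have hwp0 : wsum wt wp = 0 := by
    rw [wsum_pot wt (fun _ => 0) wp]; · simp
    intro d hd
    by_contra hne
    have h1 := (hwp _).1 (wp.dart_fst_mem_support_of_mem_darts hd)
    obtain ⟨t, h2, h3, h4⟩ := h1
    have h5 := S.near d.fst t (by have := S.fle y; omega)
    rw [← h4, dist_self] at h5
    have h6 : D d.fst = 0 := by rw [← h4]; simp only [hD]; omega
    rcases hwt0 d.fst d.snd (by simpa using hne) with ⟨⟨h7, _⟩, _⟩ | ⟨⟨h7, _⟩, _⟩ <;> omega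
  let W : G.Walk x x := Walk.cons h (wy.append
    ((wp.copy rfl (by rw [hxy])).reverse.append wx.reverse))
  have hW : wsum wt W ≠ 0 := by
    have e : wsum wt (wp.copy rfl (congrArg p hxy)) = wsum wt wp := by simp [wsum]
    simp only [W]
    rw [wsum_cons, wsum_append, wsum_append, wsum_reverse wt hwt, wsum_reverse wt hwt,
      hconst x wx hwx, hconst y wy hwy, hwtxy, e, hwp0]
    norm_num
  obtain ⟨u, w, hw, hgeo⟩ := min_closed S.conn wt hwt x W hW
  -- a dart in the far part
  have hfar : ∃ d ∈ w.darts, wt d.fst d.snd ≠ 0 := by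
    by_contra hcon
    push Not at hcon
    apply hw
    rw [wsum_pot wt (fun _ => 0) w (by intro d hd; simpa using hcon d hd)]; simp
  have hcross : ∀ c, 3 * k ≤ c → c + 3 * k < n → ∃ d ∈ w.darts,
      D d.fst ≤ 3 * k ∧ D d.snd ≤ 3 * k ∧
      ((f d.fst ≤ c ∧ c < f d.snd) ∨ (f d.snd ≤ c ∧ c < f d.fst)) := by
    intro c hc1 hc2
    by_contra hcon
    push Not at hcon
    apply hw
    rw [wsum_pot wt (fun v => if c < f v then 1 else 0) w]; · simp
    intro d hd
    have hc := hcon d hd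
    have hA : ∀ v, 3 * k + 1 ≤ D v → A0 v ∨ A1 v := by
      intro v hv
      rcases S.claw hN v (f v) (S.fle v) hv (S.near v) with h1 | h1
      · exact Or.inl ⟨hv, h1⟩
      · exact Or.inr ⟨hv, h1⟩
    have hw1 : ∀ u v, wt u v = (if A0 u ∧ A1 v then 1 else 0) - (if A1 u ∧ A0 v then 1 else 0) :=
      fun _ _ => rfl
    by_cases h1 : D d.fst ≤ 3 * k <;> by_cases h2 : D d.snd ≤ 3 * k
    · have h3 := hc h1 h2
      rw [hw1, if_neg (by rintro ⟨⟨h7, _⟩, _⟩; omega), if_neg (by rintro ⟨⟨h7, _⟩, _⟩; omega)]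
      split_ifs <;> first | rfl | omega
    · have h3 := S.edge hN d.snd d.fst d.adj.symm (by simp only [hD] at h2; omega) h1
      rw [hw1, if_neg (by rintro ⟨⟨h7, _⟩, _⟩; omega), if_neg (by rintro ⟨⟨h7, _⟩, _⟩; omega)]
      split_ifs <;> first | rfl | omega
    · have h3 := S.edge hN d.fst d.snd d.adj (by simp only [hD] at h1; omega) h2
      rw [hw1, if_neg (by rintro ⟨_, ⟨h7, _⟩⟩; omega), if_neg (by rintro ⟨_, ⟨h7, _⟩⟩; omega)]
      split_ifs <;> first | rfl | omega
    · push Not at h1 h2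
      rw [hw1]
      rcases hA _ h1 with h3 | h3 <;> rcases hA _ h2 with h4 | h4 <;>
      simp only [hA0, hA1] at h3 h4 ⊢ <;>
      split_ifs <;> first | rfl | omega
  obtain ⟨d, hd, hdw⟩ := hfar
  have hz0 : ∃ z ∈ w.support, D z ≤ 3 * k ∧ f z ≤ 3 * k := by
    obtain ⟨d, hd, h1, h2, h3⟩ := hcross (3 * k) le_rfl (by omega)
    rcases h3 with h3 | h3
    · exact ⟨_, w.dart_fst_mem_support_of_mem_darts hd, h1, h3.1⟩
    · exact ⟨_, w.dart_snd_mem_support_of_mem_darts hd, h2, h3.1⟩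
  have hz1 : ∃ z ∈ w.support, D z ≤ 3 * k ∧ n ≤ f z + 3 * k := by
    obtain ⟨d, hd, h1, h2, h3⟩ := hcross (n - 3 * k - 1) (by omega) (by omega)
    rcases h3 with h3 | h3
    · exact ⟨_, w.dart_snd_mem_support_of_mem_darts hd, h2, by omega⟩
    · exact ⟨_, w.dart_fst_mem_support_of_mem_darts hd, h1, by omega⟩
  obtain ⟨z0, hz0, hz0D, hz0f⟩ := hz0
  obtain ⟨z1, hz1, hz1D, hz1f⟩ := hz1
  obtain ⟨i, rfl, hi⟩ := Walk.mem_support_iff_exists_getVert.1 hz0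
  obtain ⟨j, rfl, hj⟩ := Walk.mem_support_iff_exists_getVert.1 hz1
  obtain ⟨a, ha, hda⟩ := List.getElem_of_mem hd
  have ha' : a < w.length := by simpa using ha
  rw [Walk.darts_getElem_eq_getVert] at hda
  have hd1 : d.fst = w.getVert a := by rw [← hda]
  have hd2 : d.snd = w.getVert (a + 1) := by rw [← hda]
  -- upper bound on distances
  have hub : ∀ s t, s ≤ t → t ≤ w.length → G.dist (w.getVert s) (w.getVert t) ≤ t - s ∧
      G.dist (w.getVert s) (w.getVert t) ≤ w.length - (t - s) := by
    intro s t hst ht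
    refine ⟨dist_getVert_le w hst, ?_⟩
    have e1 := dist_getVert_le w (Nat.zero_le s)
    have e2 := dist_getVert_le w ht
    have e3 := S.conn.dist_triangle (u := w.getVert s) (v := w.getVert 0) (w := w.getVert t)
    rw [Walk.getVert_length] at e2
    rw [Walk.getVert_zero] at e1 e3
    rw [dist_comm (u := w.getVert s) (v := u)] at e3
    rw [dist_comm (u := w.getVert t) (v := u)] at e2
    omega
  have hub' : ∀ s t, s ≤ w.length → t ≤ w.length →
      (s ≤ t ∧ G.dist (w.getVert s) (w.getVert t) ≤ t - s ∧
      G.dist (w.getVert s) (w.getVert t) ≤ w.length - (t - s)) ∨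
      (t ≤ s ∧ G.dist (w.getVert s) (w.getVert t) ≤ s - t ∧
      G.dist (w.getVert s) (w.getVert t) ≤ w.length - (s - t)) := by
    intro s t hs ht
    rcases le_total s t with hst | hst
    · exact Or.inl ⟨hst, hub s t hst ht⟩
    · rw [dist_comm]; exact Or.inr ⟨hst, hub t s hst hs⟩
  have hDfar : 6 * k + 1 ≤ D (w.getVert a) ∧ 6 * k + 1 ≤ D (w.getVert (a + 1)) := by
    have e1 := S.sep d.fst d.snd
    have e2 := S.lip d.fst d.snd
    have e3 := S.lip d.snd d.fst
    have e4 : G.dist d.fst d.snd = 1 := dist_eq_one_iff_adj.2 d.adj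
    rw [dist_comm (u := d.snd) (v := d.fst), e4] at e3
    rw [← hd1, ← hd2]
    simp only [hD]
    rcases hwt0 _ _ hdw with ⟨⟨_, h1⟩, ⟨_, h2⟩⟩ | ⟨⟨_, h1⟩, ⟨_, h2⟩⟩ <;> omega
  have f1 := S.lip (w.getVert a) (w.getVert i)
  have f2 := S.lip (w.getVert (a + 1)) (w.getVert i)
  have f3 := S.lip (w.getVert a) (w.getVert j)
  have f4 := S.lip (w.getVert (a + 1)) (w.getVert j)
  have f5 := (S.sep (w.getVert i) (w.getVert j)).1
  have g1 := hub' a i (by omega) hi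
  have g2 := hub' (a + 1) i (by omega) hi
  have g3 := hub' a j (by omega) hj
  have g4 := hub' (a + 1) j (by omega) hj
  have g5 := hub' i j hi hj
  simp only [hD] at *
  have hL : 12 * k + 6 ≤ w.length := by
    have e1 : 3 * k + 1 ≤ G.dist (w.getVert a) (w.getVert i) := by omega
    have e2 : 3 * k + 1 ≤ G.dist (w.getVert (a + 1)) (w.getVert i) := by omega
    have e3 : 3 * k + 1 ≤ G.dist (w.getVert a) (w.getVert j) := by omega
    have e4 : 3 * k + 1 ≤ G.dist (w.getVert (a + 1)) (w.getVert j) := by omega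
    have e5 : 6 * k + 3 ≤ G.dist (w.getVert i) (w.getVert j) := by omega
    clear f1 f2 f3 f4 f5
    omega
  refine hC w.getVert w.length hL (by simp) (fun t ht => w.adj_getVert_succ ht) ?_
  exact hgeo

lemma Setup.cover0 {V : Type*} {G : SimpleGraph V} {k n : ℕ} {p : ℕ → V} {f : V → ℕ}
    (S : Setup G k n p f) (hN : NoClaw G k) (hC : NoCyc G k) (v : V) (hv : f v ≤ 3 * k) :
    G.dist v (p (f v)) ≤ 9 * k := by
  by_contra hcon
  push Not at hcon
  have hn := S.hn
  obtain ⟨q, q0, q1, qg⟩ := RadialPaper.geo S.conn v (p n)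
  have hm := S.diam v (p n)
  set m := G.dist v (p n) with hmdef
  have hfar : ∀ t ≤ m, f (q t) ≤ 3 * k → 3 * k + 1 ≤ G.dist (q t) (p (f (q t))) := by
    intro t ht hf
    by_contra hlt
    have e1 := qg 0 t (by omega) ht
    have e2 := qg t m ht le_rfl
    rw [q0] at e1
    rw [q1] at e2
    have e3 := S.lip v (q t)
    have e4 := S.conn.dist_triangle (u := p (f (q t))) (v := q t) (w := p n)
    have e5 := S.geo (f (q t)) n (by omega) le_rfl
    rw [dist_comm (u := p (f (q t))) (v := q t)] at e4
    omega
  have hend : ¬ f (q m) ≤ 3 * k := by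
    rw [q1]
    have e1 := S.near (p n) n le_rfl
    rw [dist_self] at e1
    have e2 := S.geo (f (p n)) n (S.fle _) le_rfl
    rw [dist_comm] at e2
    omega
  have hex : ∃ t, t ≤ m ∧ ¬ f (q t) ≤ 3 * k := ⟨m, le_rfl, hend⟩
  classical
  obtain ⟨h1, h2⟩ := Nat.find_spec hex
  have h3 := fun t (ht : t < Nat.find hex) => Nat.find_min hex ht
  set t := Nat.find hex
  have ht0 : t ≠ 0 := by
    intro h0; rw [h0, q0] at h2; exact h2 hv
  have h4 : f (q (t - 1)) ≤ 3 * k := by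
    have := h3 (t - 1) (by omega)
    push Not at this
    exact this (by omega)
  have hadj : G.Adj (q (t - 1)) (q t) := by
    rw [← dist_eq_one_iff_adj, qg _ _ (by omega) h1]; omega
  have hx := hfar (t - 1) (by omega) h4
  have hy : 3 * k + 1 ≤ G.dist (q t) (p (f (q t))) := by
    by_contra hlt
    have := S.edge hN _ _ hadj hx (by omega)
    omega
  have hfy := S.claw hN (q t) (f (q t)) (S.fle _) hy (S.near _)
  exact S.no_far_edge hN hC _ _ hadj hx hy h4 (by omega)

lemma Setup.cover {V : Type*} {G : SimpleGraph V} {k n : ℕ} {p : ℕ → V} {f : V → ℕ}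
    (S : Setup G k n p f) (hN : NoClaw G k) (hC : NoCyc G k) (v : V) :
    G.dist v (p (f v)) ≤ 9 * k := by
  by_contra hcon
  push Not at hcon
  rcases S.claw hN v (f v) (S.fle v) (by omega) (S.near v) with h | h
  · have := S.cover0 hN hC v h; omega
  · have := S.rev.cover0 hN hC v (by omega)
    have h2 : n - (n - f v) = f v := by have := S.fle v; omega
    simp only [h2] at this
    omega

lemma conn_bags {V : Type*} [Finite V] {G : SimpleGraph V} {k : ℕ} (hc : G.Connected)
    (hN : NoClaw G k) (hC : NoCyc G k) :
    ∃ f : V → ℕ, (∀ u v, G.Adj u v → f u ≤ f v + (18 * k + 1)) ∧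
      ∀ j v0, f v0 ≤ j → j ≤ f v0 + (18 * k + 1) →
        ∃ z, (f z ≤ j ∧ j ≤ f z + (18 * k + 1)) ∧
        ∀ v, f v ≤ j → j ≤ f v + (18 * k + 1) → ∃ w : G.Walk z v, w.length ≤ 18 * k + 2 ∧
          ∀ x ∈ w.support, f x ≤ j ∧ j ≤ f x + (18 * k + 1) := by
  classical
  have hne := hc.nonempty
  obtain ⟨⟨a, b⟩, hab⟩ := Finite.exists_max (fun x : V × V => G.dist x.1 x.2)
  have hdiam : ∀ u v, G.dist u v ≤ G.dist a b := fun u v => hab (u, v)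
  obtain ⟨p, p0, p1, pg⟩ := geo hc a b
  set n := G.dist a b with hn
  by_cases hsmall : n ≤ 18 * k + 2
  · refine ⟨fun _ => 0, fun _ _ _ => Nat.zero_le _, ?_⟩
    intro j v0 h1 h2
    refine ⟨v0, ⟨h1, h2⟩, ?_⟩
    intro v _ _
    obtain ⟨w, hw⟩ := hc.exists_walk_length_eq_dist v0 v
    exact ⟨w, by have := hdiam v0 v; omega, fun _ _ => ⟨h1, h2⟩⟩
  have hex : ∀ v, ∃ i, i ≤ n ∧ ∀ j ≤ n, G.dist v (p i) ≤ G.dist v (p j) := by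
    intro v
    obtain ⟨i, hi, h⟩ := Finset.exists_min_image (Finset.range (n + 1)) (fun i => G.dist v (p i))
      ⟨0, by simp⟩
    simp only [Finset.mem_range] at hi h
    exact ⟨i, by omega, fun j hj => h j (by omega)⟩
  set f : V → ℕ := fun v => Nat.find (hex v) with hf
  have hf1 : ∀ v, f v ≤ n := fun v => (Nat.find_spec (hex v)).1
  have hf2 : ∀ v j, j ≤ n → G.dist v (p (f v)) ≤ G.dist v (p j) :=
    fun v => (Nat.find_spec (hex v)).2
  have hf3 : ∀ v i, i ≤ n → (∀ j ≤ n, G.dist v (p i) ≤ G.dist v (p j)) → f v ≤ i :=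
    fun v i h1 h2 => Nat.find_min' (hex v) ⟨h1, h2⟩
  clear_value f
  have S : Setup G k n p f := by
    refine ⟨hc, pg, hdiam, by omega, hf1, hf2, ?_⟩
    intro v
    obtain ⟨w, hw⟩ := hc.exists_walk_length_eq_dist v (p (f v))
    refine ⟨w, hw, ?_⟩
    intro x hx
    obtain ⟨t, rfl, ht⟩ := Walk.mem_support_iff_exists_getVert.1 hx
    have e1 := dist_getVert_le w (Nat.zero_le t)
    have e2 := dist_getVert_le w ht
    rw [Walk.getVert_zero] at e1
    rw [Walk.getVert_length] at e2
    apply le_antisymm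
    · apply hf3 _ _ (hf1 v)
      intro j hj
      have e3 := hf2 v j hj
      have e4 := hc.dist_triangle (u := v) (v := w.getVert t) (w := p j)
      omega
    · apply hf3 _ _ (hf1 _)
      intro j hj
      have e3 := hf2 v j hj
      have e4 := hc.dist_triangle (u := v) (v := w.getVert t) (w := p (f (w.getVert t)))
      have e5 := hf2 (w.getVert t) (f v) (hf1 v)
      omega
  have hcov := S.cover hN hC
  have hfp : ∀ t ≤ n, f (p t) = t := by
    intro t ht
    have e1 := hf2 (p t) t ht
    rw [SimpleGraph.dist_self] at e1
    have e2 := hf1 (p t)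
    rcases le_total t (f (p t)) with h | h
    · have := pg _ _ h e2; omega
    · have := pg _ _ h ht
      rw [dist_comm] at this; omega
  have seg : ∀ s t, s ≤ t → t ≤ n → ∃ w : G.Walk (p s) (p t), w.length = t - s ∧
      ∀ x ∈ w.support, s ≤ f x ∧ f x ≤ t := by
    intro s t hst ht
    obtain ⟨w, h1, h2, -, -⟩ := walk_of_fun (G := G) p s (t - s) (by
      intro r h1 h2
      rw [← dist_eq_one_iff_adj, pg _ _ (by omega) (by omega)]; omega)
    have e : s + (t - s) = t := by omega
    refine ⟨w.copy rfl (by rw [e]), by simpa using h1, ?_⟩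
    intro x hx
    rw [Walk.support_copy, h2] at hx
    obtain ⟨r, h3, h4, rfl⟩ := hx
    rw [hfp r (by omega)]; omega
  have seg' : ∀ s t, s ≤ n → t ≤ n → ∃ w : G.Walk (p s) (p t), w.length ≤ (t - s) + (s - t) ∧
      ∀ x ∈ w.support, min s t ≤ f x ∧ f x ≤ max s t := by
    intro s t hs ht
    rcases le_total s t with h | h
    · obtain ⟨w, h1, h2⟩ := seg s t h ht
      exact ⟨w, by omega, fun x hx => by have := h2 x hx; omega⟩
    · obtain ⟨w, h1, h2⟩ := seg t s h hs
      exact ⟨w.reverse, by simp; omega, fun x hx => by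
        rw [Walk.support_reverse, List.mem_reverse] at hx
        have := h2 x hx; omega⟩
  refine ⟨f, ?_, ?_⟩
  · intro u v h
    have := (S.sep u v).2
    have := hcov u
    have := hcov v
    have := dist_eq_one_iff_adj.2 h
    omega
  · intro j v0 h1 h2
    have hv0 := hf1 v0
    set c := min (min j n) (j - (18 * k + 1) + 9 * k) with hcdef
    have hcn : c ≤ n := by omega
    refine ⟨p c, by rw [hfp c hcn]; omega, ?_⟩
    intro v h3 h4
    have hv := hf1 v
    obtain ⟨w1, hw1, hw1'⟩ := seg' c (f v) hcn hv
    obtain ⟨w2, hw2, hw2'⟩ := S.cons v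
    refine ⟨w1.append w2.reverse, ?_, ?_⟩
    · have := hcov v
      simp only [Walk.length_append, Walk.length_reverse]; omega
    · intro x hx
      rw [Walk.mem_support_append_iff, Walk.support_reverse, List.mem_reverse] at hx
      rcases hx with hx | hx
      · have := hw1' x hx; omega
      · have := hw2' x hx; omega

lemma comp_walk {V : Type*} {G : SimpleGraph V} (C : G.ConnectedComponent) {u v : V}
    (w : G.Walk u v) (hu : u ∈ C.supp) : ∀ x ∈ w.support, x ∈ C.supp := by
  classical
  intro x hx
  have h : G.Reachable u x := ⟨w.takeUntil x hx⟩
  rw [ConnectedComponent.mem_supp_iff] at *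
  rw [← hu]; exact (ConnectedComponent.sound h).symm

lemma walk_lift {V : Type*} {G : SimpleGraph V} (s : Set V) {u v : V} (w : G.Walk u v)
    (h : ∀ x ∈ w.support, x ∈ s) :
    ∃ w' : (G.induce s).Walk ⟨u, h u w.start_mem_support⟩ ⟨v, h v w.end_mem_support⟩,
      w'.length = w.length := by
  induction w with
  | nil => exact ⟨Walk.nil, rfl⟩
  | cons hh p ih =>
    obtain ⟨w', hw'⟩ := ih (fun x hx => h x (by simp [hx]))
    exact ⟨Walk.cons (by simpa using hh) w', by simp [hw']⟩

lemma walk_proj {V : Type*} {G : SimpleGraph V} (s : Set V) {u v : s}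
    (w : (G.induce s).Walk u v) :
    ∃ w' : G.Walk (u : V) v, w'.length = w.length ∧
      ∀ x ∈ w'.support, ∃ y ∈ w.support, (y : V) = x := by
  induction w with
  | nil => exact ⟨Walk.nil, rfl, by simp⟩
  | cons hh p ih =>
    obtain ⟨w', hw', h2⟩ := ih
    refine ⟨Walk.cons (by simpa using hh) w', by simp [hw'], ?_⟩
    intro x hx
    rw [Walk.support_cons, List.mem_cons] at hx
    rcases hx with rfl | hx
    · exact ⟨_, by simp, rfl⟩
    · obtain ⟨y, hy, e⟩ := h2 x hx
      exact ⟨y, by simp [hy], e⟩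

lemma comp_dist {V : Type*} {G : SimpleGraph V} (C : G.ConnectedComponent) (u v : C.supp) :
    (G.induce C.supp).dist u v = G.dist (u : V) v := by
  have hc : (G.induce C.supp).Connected := C.connected_toSimpleGraph
  apply le_antisymm
  · have hr : G.Reachable (u : V) v := by
      apply ConnectedComponent.exact
      rw [u.2, v.2]
    obtain ⟨w, hw⟩ := hr.exists_walk_length_eq_dist
    obtain ⟨w', hw'⟩ := walk_lift C.supp w (comp_walk C w u.2)
    rw [← hw, ← hw']; exact dist_le w'
  · obtain ⟨w, hw⟩ := hc.exists_walk_length_eq_dist u v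
    obtain ⟨w', hw', -⟩ := walk_proj C.supp w
    rw [← hw, ← hw']
    exact dist_le w'

lemma NoCyc.comp {V : Type*} {G : SimpleGraph V} {k : ℕ} (h : NoCyc G k)
    (C : G.ConnectedComponent) : NoCyc (G.induce C.supp) k := by
  intro c L h1 h2 h3 h4
  refine h (fun t => (c t : V)) L h1 (by simp [h2]) (fun t ht => h3 t ht) ?_
  intro i j hij hj
  rw [← comp_dist]; exact h4 i j hij hj

lemma NoClaw.comp {V : Type*} {G : SimpleGraph V} {k : ℕ} (h : NoClaw G k)
    (C : G.ConnectedComponent) : NoClaw (G.induce C.supp) k := by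
  intro c h1 h2 h3 h4
  refine h (fun a t => (c a t : V)) (fun a b => by simp [h1 a b]) (fun a t ht => h2 a t ht) ?_ ?_
  · intro a s t hst ht
    rw [← comp_dist]; exact h3 a s t hst ht
  · intro a b s t hab hs ht
    rw [← comp_dist]; exact h4 a b s t hab hs ht

lemma path_union (n : ℕ) : IsUnionOfPaths (pathGraph n) := by
  intro cc
  refine ⟨n, ?_⟩
  have : cc.supp = Set.univ := by
    ext x
    simp only [ConnectedComponent.mem_supp_iff, Set.mem_univ, iff_true]
    induction cc using ConnectedComponent.ind with
    | h v => exact ConnectedComponent.sound (pathGraph_preconnected n x v)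
  rw [this]
  exact ⟨induceUnivIso _⟩

lemma path_interval (n a b : ℕ) (hab : a ≤ b) (hb : b < n) :
    ((pathGraph n).induce {h : Fin n | a ≤ h.1 ∧ h.1 ≤ b}).Connected := by
  have key : ∀ t (h1 : a ≤ a + t) (h2 : a + t ≤ b),
      ((pathGraph n).induce {h : Fin n | a ≤ h.1 ∧ h.1 ≤ b}).Reachable
        ⟨⟨a, by omega⟩, le_rfl, hab⟩ ⟨⟨a + t, by omega⟩, h1, h2⟩ := by
    intro t
    induction t with
    | zero => intro _ _; exact Reachable.refl _
    | succ t ih =>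
      intro h1 h2
      refine (ih (by omega) (by omega)).trans (Adj.reachable ?_)
      simp only [comap_adj, Function.Embedding.subtype_apply, pathGraph_adj]
      left; omega
  have key' : ∀ x : {h : Fin n | a ≤ h.1 ∧ h.1 ≤ b},
      ((pathGraph n).induce {h : Fin n | a ≤ h.1 ∧ h.1 ≤ b}).Reachable
        ⟨⟨a, by omega⟩, le_rfl, hab⟩ x := by
    rintro ⟨⟨x, hx⟩, h1, h2⟩
    have := key (x - a) (by omega) (by simp at h1 h2; omega)
    have e : a + (x - a) = x := by simp at h1; omega
    simp only [e] at this
    exact this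
  have : Nonempty {h : Fin n | a ≤ h.1 ∧ h.1 ≤ b} := ⟨⟨⟨a, by omega⟩, le_rfl, hab⟩⟩
  exact ⟨fun x y => (key' x).symm.trans (key' y)⟩

lemma final_decomp {V : Type*} [Fintype V] (k : ℕ) (G : SimpleGraph V)
    (hC : NoCyc G k) (hN : NoClaw G k) :
    ∃ (n : ℕ) (Hg : SimpleGraph (Fin n)) (B : Fin n → Set V),
      IsUnionOfPaths Hg ∧ IsGraphDecomp G Hg B ∧
      ∀ h, radiusLE (G.induce (B h)) (18 * k + 2) := by
  classical
  have hcomp := fun C : G.ConnectedComponent =>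
    conn_bags (G := G.induce C.supp) C.connected_toSimpleGraph (hN.comp C) (hC.comp C)
  choose f hf1 hf2 using hcomp
  let F : V → ℕ := fun v => f (G.connectedComponentMk v) ⟨v, rfl⟩
  have hF : ∀ (C : G.ConnectedComponent) (x : C.supp), F x = f C x := by
    rintro C ⟨x, hx⟩
    cases hx; rfl
  obtain ⟨M, hM⟩ : ∃ M, ∀ v, F v ≤ M := by
    obtain ⟨M, hM⟩ := (Set.finite_range F).bddAbove
    exact ⟨M, fun v => hM ⟨v, rfl⟩⟩
  obtain ⟨m, ⟨e⟩⟩ := Finite.exists_equiv_fin G.ConnectedComponent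
  set R := 18 * k + 1 with hR
  set K := M + R + 1 with hK
  let E : V → ℕ := fun v => (e (G.connectedComponentMk v)).1
  have hE : ∀ v, E v < m := fun v => (e (G.connectedComponentMk v)).2
  let pos : V → ℕ := fun v => E v * K + F v
  have hpos : ∀ v, pos v + R < m * K := by
    intro v
    have h1 : (E v + 1) * K ≤ m * K := Nat.mul_le_mul_right _ (hE v)
    have h2 := hM v
    have h3 : pos v = E v * K + F v := rfl
    rw [Nat.add_mul] at h1
    omega
  have hdiv : ∀ v j, pos v ≤ j → j ≤ pos v + R → j / K = E v := by
    intro v j h1 h2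
    have h3 : pos v = E v * K + F v := rfl
    have := hM v
    apply Nat.div_eq_of_lt_le
    · omega
    · rw [Nat.add_mul]; omega
  refine ⟨m * K, pathGraph _, fun j => {v | pos v ≤ j.1 ∧ j.1 ≤ pos v + R}, path_union _,
    ⟨?_, ?_, ?_⟩, ?_⟩
  · intro v
    exact ⟨⟨pos v, by have := hpos v; omega⟩, by simp⟩
  · intro u v h
    have hcc : G.connectedComponentMk u = G.connectedComponentMk v :=
      ConnectedComponent.sound h.reachable
    have hEE : E u = E v := by simp only [E, hcc]
    have a1 := hf1 (G.connectedComponentMk v) ⟨u, hcc⟩ ⟨v, rfl⟩ h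
    have a2 := hf1 (G.connectedComponentMk v) ⟨v, rfl⟩ ⟨u, hcc⟩ h.symm
    rw [← hF, ← hF] at a1 a2
    have h3 : pos v = E v * K + F v := rfl
    have h4 : pos u = E u * K + F u := rfl
    have := hpos u
    have := hpos v
    rw [hEE] at h4
    refine ⟨⟨max (pos u) (pos v), by omega⟩, ?_, ?_⟩ <;> simp only [Set.mem_ofPred_eq] <;> 
      simp only at a1 a2 <;> omega
  · intro v
    exact path_interval (m * K) (pos v) (pos v + R) (by omega) (hpos v)
  · rintro ⟨j, hj⟩ ⟨⟨v0, hv0⟩⟩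
    simp only [Set.mem_ofPred_eq] at hv0
    set C := G.connectedComponentMk v0 with hCdef
    have q0 : pos v0 = E v0 * K + F v0 := rfl
    have r0 : F v0 = f C ⟨v0, rfl⟩ := rfl
    obtain ⟨z, hz, hzw⟩ := hf2 C (j - E v0 * K) ⟨v0, rfl⟩ (by omega) (by omega)
    have hmem : ∀ x : C.supp, (f C x ≤ j - E v0 * K ∧ j - E v0 * K ≤ f C x + R) →
        pos x ≤ j ∧ j ≤ pos x + R := by
      intro x hx
      have : E x = E v0 := by
        have := x.2
        rw [ConnectedComponent.mem_supp_iff] at this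
        simp only [E, this, hCdef]
      have q1 : pos x = E x * K + F x := rfl
      rw [hF, this] at q1
      omega
    refine ⟨⟨z, hmem z hz⟩, ?_⟩
    rintro ⟨v, hv⟩
    simp only [Set.mem_ofPred_eq] at hv
    have hEv : E v = E v0 := by
      rw [← hdiv v j hv.1 hv.2, ← hdiv v0 j hv0.1 hv0.2]
    have hvC : G.connectedComponentMk v = C := by
      apply e.injective; exact Fin.ext hEv
    have q1 : pos v = E v * K + F v := rfl
    have q2 := hF C ⟨v, hvC⟩
    simp only at q2
    rw [q2, hEv] at q1
    obtain ⟨w, hwl, hws⟩ := hzw ⟨v, hvC⟩ (by omega) (by omega)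
    obtain ⟨w', hl, hw0⟩ := walk_proj C.supp w
    have hw' : ∀ x ∈ w'.support, x ∈ {v | pos v ≤ j ∧ j ≤ pos v + R} := by
      intro x hx
      obtain ⟨y, hy, rfl⟩ := hw0 x hx
      exact hmem y (hws y hy)
    obtain ⟨w2, hw2⟩ := walk_lift _ w' hw'
    refine le_trans (edist_le w2) ?_
    rw [hw2, hl]
    exact_mod_cast hwl

lemma edist_le_of_walk {V : Type*} {G : SimpleGraph V} (Y : G.Subgraph) {u v : V}
    (w : G.Walk u v) (hv : u ∈ Y.verts) (hv' : v ∈ Y.verts) (he : ∀ e ∈ w.edges, e ∈ Y.edgeSet) :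
    Y.coe.edist ⟨u, hv⟩ ⟨v, hv'⟩ ≤ (w.length : ℕ∞) := by
  induction w with
  | nil => simp
  | @cons a b c hh p ih =>
    have h1 : Y.Adj a b := by
      have := he s(a, b) (by simp)
      rwa [Subgraph.mem_edgeSet] at this
    have h2 := ih (Y.edge_vert h1.symm) hv' (fun e h => he e (by simp [h]))
    have h3 : Y.coe.edist ⟨a, hv⟩ ⟨b, Y.edge_vert h1.symm⟩ ≤ 1 :=
      edist_le_one_iff_adj_or_eq.2 (Or.inl (by simpa using h1))
    calc _ ≤ _ := Y.coe.edist_triangle (v := ⟨b, Y.edge_vert h1.symm⟩)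
      _ ≤ 1 + (p.length : ℕ∞) := add_le_add h3 h2
      _ = _ := by rw [Walk.length_cons]; push_cast; rw [add_comm]

/-- build a subdivision from walks along increasing pairs -/
lemma mk_subdiv {V W : Type*} [LinearOrder W] {G : SimpleGraph V} (X : SimpleGraph W) (k : ℕ)
    (f : W → V) (q : ∀ u v : W, X.Adj u v → u < v → G.Walk (f u) (f v))
    (hinj : Function.Injective f)
    (hpath : ∀ u v h hl, (q u v h hl).IsPath)
    (hlen : ∀ u v h hl, k + 1 ≤ (q u v h hl).length)
    (hbr : ∀ u v h hl w, f w ∈ (q u v h hl).support → w = u ∨ w = v)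
    (hdis : ∀ u v u' v' h hl h' hl', (u, v) ≠ (u', v') → ∀ x, x ∈ (q u v h hl).support →
      x ∈ (q u' v' h' hl').support → (x = f u ∨ x = f v) ∧ (x = f u' ∨ x = f v')) :
    ∃ Y : G.Subgraph, IsSubdivGE k X Y ∧
      Y.verts = Set.range f ∪ {x | ∃ u v h hl, x ∈ (q u v h hl).support} ∧
      Y.edgeSet = {e | ∃ u v h hl, e ∈ (q u v h hl).edges} := by
  let p : ∀ ⦃u v : W⦄, X.Adj u v → G.Walk (f u) (f v) := fun u v h =>
    if hl : u < v then q u v h hl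
    else (q v u h.symm (lt_of_le_of_ne (not_lt.1 hl) h.ne')).reverse
  have hp1 : ∀ u v (h : X.Adj u v) (hl : u < v), p h = q u v h hl := by
    intro u v h hl; simp only [p, dif_pos hl]
  have hp2 : ∀ u v (h : X.Adj u v) (hl : v < u), p h = (q v u h.symm hl).reverse := by
    intro u v h hl; simp only [p, dif_neg (not_lt.2 hl.le)]
  have hcase : ∀ u v, X.Adj u v → u < v ∨ v < u := fun u v h => lt_or_gt_of_ne h.ne
  have hverts : {x : V | ∃ u v h hl, x ∈ (q u v h hl).support} =
      {x : V | ∃ (u v : W) (h : X.Adj u v), x ∈ (p h).support} := by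
    ext x
    constructor
    · rintro ⟨u, v, h, hl, hx⟩
      exact ⟨u, v, h, by rwa [hp1 u v h hl]⟩
    · rintro ⟨u, v, h, hx⟩
      rcases hcase u v h with hl | hl
      · rw [hp1 u v h hl] at hx; exact ⟨u, v, h, hl, hx⟩
      · rw [hp2 u v h hl, Walk.support_reverse, List.mem_reverse] at hx
        exact ⟨v, u, h.symm, hl, hx⟩
  have hedges : {e | ∃ u v h hl, e ∈ (q u v h hl).edges} =
      {e | ∃ (u v : W) (h : X.Adj u v), e ∈ (p h).edges} := by
    ext x
    constructor
    · rintro ⟨u, v, h, hl, hx⟩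
      exact ⟨u, v, h, by rwa [hp1 u v h hl]⟩
    · rintro ⟨u, v, h, hx⟩
      rcases hcase u v h with hl | hl
      · rw [hp1 u v h hl] at hx; exact ⟨u, v, h, hl, hx⟩
      · rw [hp2 u v h hl, Walk.edges_reverse, List.mem_reverse] at hx
        exact ⟨v, u, h.symm, hl, hx⟩
  let Y : G.Subgraph :=
    { verts := Set.range f ∪ {x | ∃ u v h hl, x ∈ (q u v h hl).support}
      Adj := fun a b => ∃ u v h hl, s(a, b) ∈ (q u v h hl).edges
      adj_sub := by
        rintro a b ⟨u, v, h, hl, he⟩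
        exact Walk.adj_of_mem_edges _ he
      edge_vert := by
        rintro a b ⟨u, v, h, hl, he⟩
        exact Or.inr ⟨u, v, h, hl, Walk.fst_mem_support_of_mem_edges _ he⟩
      symm := ⟨by
        rintro a b ⟨u, v, h, hl, he⟩
        exact ⟨u, v, h, hl, by rwa [Sym2.eq_swap]⟩⟩ }
  have hYe : Y.edgeSet = {e | ∃ u v h hl, e ∈ (q u v h hl).edges} := by
    ext e
    induction e using Sym2.ind with
    | _ a b => rw [Subgraph.mem_edgeSet]; rfl
  refine ⟨Y, ⟨f, p, hinj, ?_, ?_, ?_, ?_, ?_, ?_, ?_⟩, rfl, hYe⟩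
  · intro u v h
    rcases hcase u v h with hl | hl
    · rw [hp1 u v h hl]; exact hpath _ _ _ _
    · rw [hp2 u v h hl]; exact (hpath _ _ _ _).reverse
  · intro u v h
    rcases hcase u v h with hl | hl
    · rw [hp1 u v h hl]; exact hlen _ _ _ _
    · rw [hp2 u v h hl, Walk.length_reverse]; exact hlen _ _ _ _
  · intro u v h
    rcases hcase u v h with hl | hl
    · rw [hp1 u v h hl, hp2 v u h.symm hl]
    · rw [hp2 u v h hl, hp1 v u h.symm hl, Walk.reverse_reverse]
  · intro u v h w hw
    rcases hcase u v h with hl | hl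
    · rw [hp1 u v h hl] at hw; exact hbr _ _ _ _ _ hw
    · rw [hp2 u v h hl, Walk.support_reverse, List.mem_reverse] at hw
      exact (hbr _ _ _ _ _ hw).symm
  · intro u v u' v' h h' hne x hx hx'
    rcases hcase u v h with hl | hl <;> rcases hcase u' v' h' with hl' | hl'
    · rw [hp1 u v h hl] at hx
      rw [hp1 u' v' h' hl'] at hx'
      exact hdis _ _ _ _ _ _ _ _ (by rintro ⟨⟩; exact hne rfl) x hx hx'
    · rw [hp1 u v h hl] at hx
      rw [hp2 u' v' h' hl', Walk.support_reverse, List.mem_reverse] at hx'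
      have := hdis _ _ _ _ _ _ _ _ (by rintro ⟨⟩; exact hne Sym2.eq_swap) x hx hx'
      tauto
    · rw [hp2 u v h hl, Walk.support_reverse, List.mem_reverse] at hx
      rw [hp1 u' v' h' hl'] at hx'
      have := hdis _ _ _ _ _ _ _ _ (by rintro ⟨⟩; exact hne Sym2.eq_swap) x hx hx'
      tauto
    · rw [hp2 u v h hl, Walk.support_reverse, List.mem_reverse] at hx
      rw [hp2 u' v' h' hl', Walk.support_reverse, List.mem_reverse] at hx'
      have := hdis _ _ _ _ _ _ _ _ (by rintro ⟨⟩; exact hne rfl) x hx hx'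
      tauto
  · show Set.range f ∪ _ = _
    rw [hverts]
  · rw [hYe, hedges]

lemma seg_walk {V : Type*} {G : SimpleGraph V} (c : ℕ → V) (a b : ℕ) (hab : a ≤ b)
    (h : ∀ t, a ≤ t → t < b → G.Adj (c t) (c (t + 1))) :
    ∃ w : G.Walk (c a) (c b), w.length = b - a ∧
      (∀ x, x ∈ w.support ↔ ∃ t, a ≤ t ∧ t ≤ b ∧ c t = x) ∧
      (∀ e, e ∈ w.edges ↔ ∃ t, a ≤ t ∧ t < b ∧ e = s(c t, c (t + 1))) ∧
      (Set.InjOn c (Set.Icc a b) → w.IsPath) := by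
  obtain ⟨n, rfl⟩ := Nat.exists_eq_add_of_le hab
  rw [Nat.add_sub_cancel_left]
  exact walk_of_fun c a n h

lemma claw_adj_lt {u v : Fin 4} (h : clawGraph.Adj u v) (hl : u < v) : u = 0 ∧ v ≠ 0 := by
  simp only [clawGraph, SimpleGraph.fromRel_adj] at h
  have := hl
  rcases h with ⟨h1, h2 | h2⟩
  · subst h2; exact ⟨rfl, fun h => h1 h.symm⟩
  · subst h2; exact absurd hl (by simp)

lemma noClaw_of {V : Type*} {G : SimpleGraph V} {k : ℕ}
    (h : ¬ ContainsQuasiGeodesicSubdivGE G (3 * k) clawGraph 3) : NoClaw G k := by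
  intro leg h0 hadj hsame hdiff
  apply h
  let M := 3 * k + 1
  have eqs : ∀ a s t, s ≤ M → t ≤ M → leg a s = leg a t → s = t := by
    intro a s t hs ht he
    rcases le_total s t with hst | hst
    · have := hsame a s t hst ht
      rw [he, SimpleGraph.dist_self] at this; omega
    · have := hsame a t s hst hs
      rw [he, SimpleGraph.dist_self] at this; omega
  have eqd : ∀ a b s t, a ≠ b → s ≤ M → t ≤ M → leg a s = leg b t → s = 0 ∧ t = 0 := by
    intro a b s t hab hs ht he
    have := hdiff a b s t hab hs ht
    rw [he, SimpleGraph.dist_self] at this; omega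
  let g : Fin 4 → Fin 3 := fun u => if u = 1 then 0 else if u = 2 then 1 else 2
  let f : Fin 4 → V := fun u => if u = 0 then leg 0 0 else leg (g u) M
  have hg : ∀ u v : Fin 4, u ≠ 0 → v ≠ 0 → g u = g v → u = v := by
    simp only [g]; decide
  have hgs : ∀ a : Fin 3, ∃ u : Fin 4, 0 < u ∧ g u = a := by
    simp only [g]; decide
  have f0 : f 0 = leg 0 0 := by simp [f]
  have fv : ∀ v, v ≠ 0 → f v = leg (g v) M := by intro v hv; simp [f, hv]
  have M1 : 1 ≤ M := by simp only [M]; omega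
  have ex : ∀ u v, clawGraph.Adj u v → u < v → ∃ w : G.Walk (f u) (f v), w.length = M ∧
      (∀ x, x ∈ w.support ↔ ∃ t, t ≤ M ∧ leg (g v) t = x) ∧
      (∀ e, e ∈ w.edges ↔ ∃ t, t < M ∧ e = s(leg (g v) t, leg (g v) (t + 1))) ∧ w.IsPath := by
    intro u v ha hl
    obtain ⟨rfl, hv⟩ := claw_adj_lt ha hl
    obtain ⟨w, w1, w2, w3, w4⟩ := seg_walk (G := G) (leg (g v)) 0 M (by omega)
      (fun t _ ht => hadj _ t ht)
    refine ⟨w.copy (by rw [f0]; exact h0 _ _) (fv v hv).symm, by simpa using w1, ?_, ?_, ?_⟩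
    · intro x; rw [Walk.support_copy, w2]; simp
    · intro x; rw [Walk.edges_copy, w3]; simp
    · rw [Walk.isPath_copy]; apply w4
      intro s hs t ht he; exact eqs _ s t hs.2 ht.2 he
  choose q q1 q2 q3 q4 using ex
  have hadj0 : ∀ v : Fin 4, 0 < v → clawGraph.Adj 0 v := by
    intro v hv
    simp only [clawGraph, SimpleGraph.fromRel_adj]
    exact ⟨hv.ne, by simp⟩
  obtain ⟨Y, hY, hYv, hYe⟩ := mk_subdiv clawGraph (3 * k) f q
    (by
      intro u v he
      by_cases hu : u = 0 <;> by_cases hv : v = 0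
      · rw [hu, hv]
      · rw [hu, f0, fv v hv, h0 0 (g v)] at he
        have := eqs _ _ _ (by omega) le_rfl he; omega
      · rw [hv, f0, fv u hu, h0 0 (g u)] at he
        have := eqs _ _ _ le_rfl (by omega) he; omega
      · rw [fv u hu, fv v hv] at he
        by_contra hne
        have := eqd _ _ _ _ (fun h => hne (hg u v hu hv h)) le_rfl le_rfl he
        omega)
    q4 (fun u v h hl => (q1 u v h hl).ge)
    (by
      intro u v ha hl w hw
      obtain ⟨t, ht, he⟩ := (q2 u v ha hl _).1 hw
      obtain ⟨rfl, hv⟩ := claw_adj_lt ha hl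
      by_cases hw0 : w = 0
      · exact Or.inl hw0
      · right
        rw [fv w hw0] at he
        by_contra hne
        have := eqd _ _ _ _ (fun h => hne (hg v w hv hw0 h).symm) ht le_rfl he
        omega)
    (by
      intro u v u' v' ha hl ha' hl' hne x hx hx'
      obtain ⟨t, ht, he⟩ := (q2 u v ha hl _).1 hx
      obtain ⟨t', ht', he'⟩ := (q2 u' v' ha' hl' _).1 hx'
      obtain ⟨rfl, hv⟩ := claw_adj_lt ha hl
      obtain ⟨rfl, hv'⟩ := claw_adj_lt ha' hl'
      have := eqd _ _ _ _ (fun h => hne (by rw [hg v v' hv hv' h])) ht ht' (he.trans he'.symm)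
      have hx0 : x = f 0 := by rw [f0, ← he, this.1]; exact h0 _ _
      exact ⟨Or.inl hx0, Or.inl hx0⟩)
  refine ⟨Y, hY, ?_⟩
  have vrep : ∀ x ∈ Y.verts, ∃ a t, t ≤ M ∧ leg a t = x := by
    intro x hx
    rw [hYv] at hx
    rcases hx with ⟨u, rfl⟩ | ⟨u, v, h, hl, hx⟩
    · by_cases hu : u = 0
      · exact ⟨0, 0, by omega, by rw [hu, f0]⟩
      · exact ⟨g u, M, le_rfl, (fv u hu).symm⟩
    · exact ⟨g v, (q2 u v h hl x).1 hx⟩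
  have vin : ∀ a t, t ≤ M → leg a t ∈ Y.verts := by
    intro a t ht
    obtain ⟨v, hv, rfl⟩ := hgs a
    rw [hYv]
    exact Or.inr ⟨0, v, hadj0 v hv, hv, (q2 _ _ _ _ _).2 ⟨t, ht, rfl⟩⟩
  have ein : ∀ a t, t < M → s(leg a t, leg a (t + 1)) ∈ Y.edgeSet := by
    intro a t ht
    obtain ⟨v, hv, rfl⟩ := hgs a
    rw [hYe]
    exact ⟨0, v, hadj0 v hv, hv, (q3 _ _ _ _ _).2 ⟨t, ht, rfl⟩⟩
  have segY : ∀ a s t (hst : s ≤ t) (ht : t ≤ M),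
      Y.coe.edist ⟨leg a s, vin a s (hst.trans ht)⟩ ⟨leg a t, vin a t ht⟩ ≤ ((t - s : ℕ) : ℕ∞) := by
    intro a s t hst ht
    obtain ⟨w, w1, -, w3, -⟩ := seg_walk (G := G) (leg a) s t hst
      (fun r _ hr => hadj _ r (lt_of_lt_of_le hr ht))
    rw [← w1]
    apply edist_le_of_walk
    intro e he
    obtain ⟨r, -, hr, rfl⟩ := (w3 e).1 he
    exact ein a r (by omega)
  have fin : ∀ (u v : Y.verts) (n : ℕ), Y.coe.edist u v ≤ (n : ℕ∞) → n ≤ 3 * G.dist (u : V) v →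
      Y.coe.edist u v ≤ ((3 : ℕ) : ℕ∞) * G.edist (u : V) v := by
    intro u v n h1 h2
    have hr : Y.coe.Reachable u v := by
      apply SimpleGraph.reachable_of_edist_ne_top
      intro h; rw [h] at h1; simp at h1
    have hr' : G.Reachable (u : V) v := hr.map Y.hom
    rw [← hr'.coe_dist_eq_edist]
    exact h1.trans (by exact_mod_cast h2)
  rintro ⟨u, hu⟩ ⟨v, hv⟩
  obtain ⟨a, s, hs, rfl⟩ := vrep u hu
  obtain ⟨b, t, ht, rfl⟩ := vrep v hv
  by_cases hab : a = b
  · subst hab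
    rcases le_total s t with hst | hst
    · exact fin _ _ _ (segY a s t hst ht) (hsame a s t hst ht)
    · refine fin _ _ _ (by rw [SimpleGraph.edist_comm]; exact segY a t s hst hs) ?_
      rw [SimpleGraph.dist_comm]; exact hsame a t s hst hs
  · refine fin _ _ (s + t) ?_ (hdiff a b s t hab hs ht)
    have e1 := segY a 0 s (by omega) hs
    have e2 := segY b 0 t (by omega) ht
    rw [SimpleGraph.edist_comm] at e1
    have e3 : (⟨leg b 0, vin b 0 (by omega)⟩ : Y.verts) = ⟨leg a 0, vin a 0 (by omega)⟩ :=
      Subtype.ext (h0 b a)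
    rw [e3] at e2
    refine (SimpleGraph.edist_triangle (v := ⟨leg a 0, vin a 0 (by omega)⟩)).trans ?_
    push_cast
    exact add_le_add (by simpa using e1) (by simpa using e2)

lemma noCyc_of {V : Type*} {G : SimpleGraph V} {k : ℕ}
    (h : ¬ ContainsQuasiGeodesicSubdivGE G (4 * k + 1) triangleGraph 1) : NoCyc G k := by
  intro c L hL hcL hadj hgeo
  apply h
  have hI : ∀ i j, i ≤ L → j ≤ L → c i = c j → i = j ∨ (i = 0 ∧ j = L) ∨ (i = L ∧ j = 0) := by
    intro i j hi hj he
    rcases le_total i j with hij | hij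
    · have := hgeo i j hij hj
      rw [he, SimpleGraph.dist_self] at this; omega
    · have := hgeo j i hij hi
      rw [he, SimpleGraph.dist_self] at this; omega
  let m := 4 * k + 2
  have hm : m = 4 * k + 2 := rfl
  clear_value m
  let ix : Fin 3 → ℕ := ![0, m, 2 * m]
  let lo : Fin 3 → Fin 3 → ℕ := fun u v => if u = 1 then m else if v = 1 then 0 else 2 * m
  let hi : Fin 3 → Fin 3 → ℕ := fun u v => if u = 1 then 2 * m else if v = 1 then m else L
  let f : Fin 3 → V := fun u => c (ix u)
  have ex : ∀ u v, triangleGraph.Adj u v → u < v → ∃ w : G.Walk (f u) (f v), m ≤ w.length ∧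
      (∀ x, x ∈ w.support ↔ ∃ t, lo u v ≤ t ∧ t ≤ hi u v ∧ c t = x) ∧
      (∀ e, e ∈ w.edges ↔ ∃ t, lo u v ≤ t ∧ t < hi u v ∧ e = s(c t, c (t + 1))) ∧ w.IsPath := by
    intro u v _ hl
    have key : lo u v ≤ hi u v ∧ hi u v ≤ L ∧ m ≤ hi u v - lo u v ∧ (lo u v = 0 → hi u v ≠ L) ∧
        ((c (lo u v) = f u ∧ c (hi u v) = f v) ∨ (c (lo u v) = f v ∧ c (hi u v) = f u)) := by
      fin_cases u <;> fin_cases v <;> simp at hl <;>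
        simp only [lo, hi, f, ix] <;> refine ⟨?_, ?_, ?_, ?_, ?_⟩ <;> simp [hcL] <;> omega
    obtain ⟨k1, k2, k3, k4, k5⟩ := key
    obtain ⟨w, w1, w2, w3, w4⟩ := seg_walk (G := G) c (lo u v) (hi u v) k1
      (fun t _ ht => hadj t (by omega))
    have wp : w.IsPath := by
      apply w4
      intro s hs t ht he
      have h1 := hs.1; have h2 := hs.2; have h3 := ht.1; have h4 := ht.2
      have := hI s t (by omega) (by omega) he
      omega
    rcases k5 with ⟨e1, e2⟩ | ⟨e1, e2⟩
    · refine ⟨w.copy e1 e2, by rw [Walk.length_copy]; omega, ?_, ?_, ?_⟩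
      · intro x; rw [Walk.support_copy, w2]
      · intro x; rw [Walk.edges_copy, w3]
      · rw [Walk.isPath_copy]; exact wp
    · refine ⟨(w.copy e1 e2).reverse, by rw [Walk.length_reverse, Walk.length_copy]; omega,
        ?_, ?_, ?_⟩
      · intro x; rw [Walk.support_reverse, List.mem_reverse, Walk.support_copy, w2]
      · intro x; rw [Walk.edges_reverse, List.mem_reverse, Walk.edges_copy, w3]
      · apply Walk.IsPath.reverse; rw [Walk.isPath_copy]; exact wp
  choose q q1 q2 q3 q4 using ex
  have hix : ∀ u, ix u < L := by
    intro u; fin_cases u <;> simp [ix] <;> omega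
  obtain ⟨Y, hY, hYv, hYe⟩ := mk_subdiv triangleGraph (4 * k + 1) f q
    (by
      intro u v he
      have h1 := hix u
      have h2 := hix v
      have := hI _ _ h1.le h2.le he
      have h3 : ix u = ix v := by omega
      revert h3
      fin_cases u <;> fin_cases v <;> simp [ix] <;> omega)
    q4 (fun u v h hl => by have := q1 u v h hl; omega)
    (by
      intro u v ha hl w hw
      obtain ⟨t, ht1, ht2, he⟩ := (q2 u v ha hl _).1 hw
      clear hw ha
      have h1 := hix w
      have ht : t ≤ L := by
        refine ht2.trans ?_
        simp only [hi]; split_ifs <;> omega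
      have := hI _ _ ht h1.le he
      revert this ht1 ht2
      fin_cases u <;> fin_cases v <;> simp at hl <;> fin_cases w <;>
        simp [lo, hi, ix] <;> omega)
    (by
      intro u v u' v' ha hl ha' hl' hne x hx hx'
      obtain ⟨t, ht1, ht2, rfl⟩ := (q2 u v ha hl _).1 hx
      obtain ⟨t', ht1', ht2', he⟩ := (q2 u' v' ha' hl' _).1 hx'
      clear hx hx' ha ha'
      have hh : ∀ u v, hi u v ≤ L := by
        intro u v
        simp only [hi]; split_ifs <;> omega
      have hx := hI _ _ (ht2.trans (hh _ _)) (ht2'.trans (hh _ _)) he.symm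
      clear he
      have A : (∃ w, t = ix w ∧ (w = u ∨ w = v) ∧ (w = u' ∨ w = v')) ∨
          (t = L ∧ (0 = u ∨ 0 = v) ∧ (0 = u' ∨ 0 = v')) := by
        revert hx ht1 ht2 ht1' ht2' hne
        fin_cases u <;> fin_cases v <;> simp at hl <;> fin_cases u' <;> fin_cases v' <;>
          simp at hl' <;> simp [lo, hi, ix, Fin.exists_fin_succ] <;> omega
      have B : ∀ w, c t = f w → (w = u ∨ w = v) ∧ (w = u' ∨ w = v') →
          (c t = f u ∨ c t = f v) ∧ (c t = f u' ∨ c t = f v') := by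
        rintro w hw ⟨h1, h2⟩
        rw [hw]
        exact ⟨h1.imp (fun h => by rw [h]) (fun h => by rw [h]),
          h2.imp (fun h => by rw [h]) (fun h => by rw [h])⟩
      rcases A with ⟨w, h1, h2⟩ | ⟨h1, h2⟩
      · exact B w (by rw [h1]) h2
      · exact B 0 (by rw [h1, hcL]; rfl) h2)
  refine ⟨Y, hY, ?_⟩
  have vrep : ∀ x ∈ Y.verts, ∃ t, t ≤ L ∧ c t = x := by
    intro x hx
    rw [hYv] at hx
    rcases hx with ⟨u, rfl⟩ | ⟨u, v, h, hl, hx⟩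
    · exact ⟨ix u, (hix u).le, rfl⟩
    · obtain ⟨t, -, h2, h3⟩ := (q2 u v h hl x).1 hx
      refine ⟨t, h2.trans ?_, h3⟩
      simp only [hi]; split_ifs <;> omega
  have a01 : triangleGraph.Adj 0 1 := by simp [triangleGraph]
  have a12 : triangleGraph.Adj 1 2 := by simp [triangleGraph]
  have a02 : triangleGraph.Adj 0 2 := by simp [triangleGraph]
  have vin : ∀ t, t ≤ L → c t ∈ Y.verts := by
    intro t ht
    rw [hYv]
    right
    by_cases h1 : t ≤ m
    · exact ⟨0, 1, a01, by decide, (q2 _ _ _ _ _).2 ⟨t, by simp [lo], by simpa [hi] using h1, rfl⟩⟩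
    by_cases h2 : t ≤ 2 * m
    · exact ⟨1, 2, a12, by decide,
        (q2 _ _ _ _ _).2 ⟨t, by simp [lo]; omega, by simpa [hi] using h2, rfl⟩⟩
    · exact ⟨0, 2, a02, by decide,
        (q2 _ _ _ _ _).2 ⟨t, by simp [lo]; omega, by simpa [hi] using ht, rfl⟩⟩
  have ein : ∀ t, t < L → s(c t, c (t + 1)) ∈ Y.edgeSet := by
    intro t ht
    rw [hYe]
    by_cases h1 : t < m
    · exact ⟨0, 1, a01, by decide, (q3 _ _ _ _ _).2 ⟨t, by simp [lo], by simpa [hi] using h1, rfl⟩⟩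
    by_cases h2 : t < 2 * m
    · exact ⟨1, 2, a12, by decide,
        (q3 _ _ _ _ _).2 ⟨t, by simp [lo]; omega, by simpa [hi] using h2, rfl⟩⟩
    · exact ⟨0, 2, a02, by decide,
        (q3 _ _ _ _ _).2 ⟨t, by simp [lo]; omega, by simpa [hi] using ht, rfl⟩⟩
  have segY : ∀ s t (hst : s ≤ t) (ht : t ≤ L),
      Y.coe.edist ⟨c s, vin s (hst.trans ht)⟩ ⟨c t, vin t ht⟩ ≤ ((t - s : ℕ) : ℕ∞) := by
    intro s t hst ht
    obtain ⟨w, w1, -, w3, -⟩ := seg_walk (G := G) c s t hst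
      (fun r _ hr => hadj r (lt_of_lt_of_le hr ht))
    rw [← w1]
    apply edist_le_of_walk
    intro e he
    obtain ⟨r, -, hr, rfl⟩ := (w3 e).1 he
    exact ein r (by omega)
  have segY' : ∀ s t (hst : s ≤ t) (ht : t ≤ L),
      Y.coe.edist ⟨c s, vin s (hst.trans ht)⟩ ⟨c t, vin t ht⟩ ≤ ((L - (t - s) : ℕ) : ℕ∞) := by
    intro s t hst ht
    have e1 := segY 0 s (by omega) (by omega)
    have e2 := segY t L ht le_rfl
    rw [SimpleGraph.edist_comm] at e1 e2
    have e3 : (⟨c L, vin L le_rfl⟩ : Y.verts) = ⟨c 0, vin 0 (by omega)⟩ := Subtype.ext hcL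
    rw [e3] at e2
    refine (SimpleGraph.edist_triangle (v := ⟨c 0, vin 0 (by omega)⟩)).trans
      ((add_le_add e1 e2).trans ?_)
    norm_cast
    omega
  have fin : ∀ (s t) (hst : s ≤ t) (ht : t ≤ L),
      Y.coe.edist ⟨c s, vin s (hst.trans ht)⟩ ⟨c t, vin t ht⟩ ≤ G.edist (c s) (c t) := by
    intro s t hst ht
    have h1 := segY s t hst ht
    have h2 := segY' s t hst ht
    have hr : Y.coe.Reachable ⟨c s, vin s (hst.trans ht)⟩ ⟨c t, vin t ht⟩ := by
      apply SimpleGraph.reachable_of_edist_ne_top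
      intro h; rw [h] at h1; simp at h1
    have hr' : G.Reachable (c s) (c t) := hr.map Y.hom
    rw [← hr'.coe_dist_eq_edist]
    rcases min_le_iff.1 (hgeo s t hst ht) with h3 | h3
    · exact h1.trans (by exact_mod_cast h3)
    · exact h2.trans (by exact_mod_cast h3)
  rintro ⟨u, hu⟩ ⟨v, hv⟩
  obtain ⟨s, hs, rfl⟩ := vrep u hu
  obtain ⟨t, ht, rfl⟩ := vrep v hv
  rw [Nat.cast_one, one_mul]
  rcases le_total s t with hst | hst
  · exact fin s t hst ht
  · rw [SimpleGraph.edist_comm, SimpleGraph.edist_comm (G := G)]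
    exact fin t s hst hs

/-- Let `k : ℕ`. If a graph `G` contains no `(≥ 4k+1)`-subdivision of the
triangle `K³` as a geodesic subgraph and no `(≥ 3k)`-subdivision of the claw `K_{1,3}` as a
`3`-quasi-geodesic subgraph, then `G` has radial path-width at most `18k + 2`. -/
theorem radial_path_width_upper_bound
    {V : Type*} [Fintype V] (k : ℕ) (G : SimpleGraph V)
    (hK3 : ¬ ContainsQuasiGeodesicSubdivGE G (4 * k + 1) triangleGraph 1)
    (hclaw : ¬ ContainsQuasiGeodesicSubdivGE G (3 * k) clawGraph 3) :
    ∃ (n : ℕ) (Hg : SimpleGraph (Fin n)) (B : Fin n → Set V),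
      IsUnionOfPaths Hg ∧ IsGraphDecomp G Hg B ∧
      ∀ h, radiusLE (G.induce (B h)) (18 * k + 2) := by
  exact final_decomp k G (noCyc_of hK3) (noClaw_of hclaw)

end RadialPaper
end
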